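/- For every ε > 0 there exists δ ∈ (0,1) such that for every ε′ > 0 there exists N with the following property: for all n ≥ N, all k dividing n with k ≥ (2+ε)·log₂ n, and all m, if S is a simple graph on {1,…,n} whose connected components are exactly m paths each on at least 2 vertices and its collection of paths is δ-normal (with respect to k), then N(S) ≤ (3+ε′)·m!·2^m. -/

import Mathlib

/-- A ROD (rooted, ordered, directed) `k`-cycle factor on `{1,…,n}`: a sequence of
`n/k` directed cycles, each on exactly `k` vertices and rooted at its first entry, whose
vertex sets partition `{1,…,n}`.  Each rooted directed cycle is encoded by the list of
its `k` vertices starting from the root and following the orientation. -/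
def RODFactor (n k : ℕ) : Type :=
  {f : Fin (n / k) → Fin k → Fin n //
    Function.Bijective fun p : Fin (n / k) × Fin k => f p.1 p.2}

/-- The underlying undirected graph of the ROD factor `F` contains every edge of `S`. -/
def RODContains {n k : ℕ} (F : RODFactor n k) (S : SimpleGraph (Fin n)) : Prop :=
  ∀ u v : Fin n, S.Adj u v → ∃ (c : Fin (n / k)) (i : Fin k),
    (F.1 c i = u ∧ F.1 c ⟨((i : ℕ) + 1) % k, Nat.mod_lt _ i.pos⟩ = v) ∨
    (F.1 c i = v ∧ F.1 c ⟨((i : ℕ) + 1) % k, Nat.mod_lt _ i.pos⟩ = u)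

/-- `N(S)`: the number of ROD `k`-cycle factors containing the graph `S`. -/
noncomputable def NS {n : ℕ} (k : ℕ) (S : SimpleGraph (Fin n)) : ℕ :=
  Nat.card {F : RODFactor n k // RODContains F S}

/-- The connected component `c` of `G` is a path on at least 2 vertices. -/
def IsPathComponent {V : Type*} (G : SimpleGraph V) (c : G.ConnectedComponent) : Prop :=
  ∃ (ℓ : ℕ) (v : Fin ℓ → V), 2 ≤ ℓ ∧ Function.Injective v ∧ Set.range v = c.supp ∧
    ∀ a b : Fin ℓ, G.Adj (v a) (v b) ↔ ((a : ℕ) + 1 = b ∨ (b : ℕ) + 1 = a)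

/-- `G` has exactly `m` connected components, each a path on at least 2 vertices. -/
def PathsGraph {n : ℕ} (G : SimpleGraph (Fin n)) (m : ℕ) : Prop :=
  Nat.card G.ConnectedComponent = m ∧ ∀ c : G.ConnectedComponent, IsPathComponent G c

/-- The collection of the `m` path components of `G` is `δ`-normal with respect to `k`:
with `p_ℓ` the fraction of the `m` paths having exactly `ℓ` vertices,
`M = (1/8)·log log k`, `ε_ℓ(δ) = (ℓ⁴(2−δ)^ℓ (log k)^{1/8})⁻¹` and
`γ_ℓ(δ) = (ℓ⁴(2−δ)^ℓ)⁻¹`, we require `p₁ = 0`, `|p_ℓ − 2^{1−ℓ}| ≤ ε_ℓ(δ)` for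
`2 ≤ ℓ ≤ M`, and `p_ℓ ≤ γ_ℓ(δ)` for `ℓ ≥ M`. -/
def GDeltaNormal (k : ℕ) (δ : ℝ) {n : ℕ} (G : SimpleGraph (Fin n)) (m : ℕ) : Prop :=
  let p : ℕ → ℝ := fun ℓ =>
    (Nat.card {c : G.ConnectedComponent // c.supp.ncard = ℓ} : ℝ) / m
  p 1 = 0 ∧
  (∀ ℓ : ℕ, 2 ≤ ℓ → (ℓ : ℝ) ≤ Real.log (Real.log k) / 8 →
    |p ℓ - (2 : ℝ) ^ (1 - (ℓ : ℤ))| ≤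
      ((ℓ : ℝ) ^ 4 * (2 - δ) ^ ℓ * Real.log k ^ ((1 : ℝ) / 8))⁻¹) ∧
  (∀ ℓ : ℕ, Real.log (Real.log k) / 8 ≤ (ℓ : ℝ) →
    p ℓ ≤ ((ℓ : ℝ) ^ 4 * (2 - δ) ^ ℓ)⁻¹)


open Finset

theorem path_walks {S A : Type*} [Fintype S] [DecidableEq S] [CommSemiring A] (M : Matrix S S A)
    (k : ℕ) : ∀ g : S → S → A, ∑ r : Fin (k+1) → S, (∏ i : Fin k, M (r i.castSucc) (r i.succ)) * g (r 0) (r (Fin.last k))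
      = ∑ a, ∑ b, (M ^ k) a b * g a b := by
  induction k with
  | zero =>
    intro g
    simp only [Finset.univ_eq_empty, Finset.prod_empty, one_mul, pow_zero, Matrix.one_apply, ite_mul, zero_mul,
      Finset.sum_ite_eq, Finset.mem_univ, if_true]
    refine Fintype.sum_equiv (Equiv.funUnique (Fin 1) S) _ _ ?_
    intro r
    rfl
  | succ k ih =>
    intro g
    rw [← (Fin.consEquiv (fun _ : Fin (k+2) => S)).sum_comp]
    rw [Fintype.sum_prod_type]
    simp only [Fin.consEquiv_apply, Fin.prod_univ_succ]
    have h : ∀ a : S, ∑ r : Fin (k+1) → S, (M (Fin.cons (α := fun _ => S) a r (Fin.castSucc 0)) (Fin.cons (α := fun _ => S) a r (Fin.succ 0)) * ∏ i : Fin k, M (Fin.cons (α := fun _ => S) a r (Fin.castSucc i.succ)) (Fin.cons (α := fun _ => S) a r (Fin.succ i.succ))) * g (Fin.cons (α := fun _ => S) a r 0) (Fin.cons (α := fun _ => S) a r (Fin.last (k+1)))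
      = ∑ r : Fin (k+1) → S, (∏ i : Fin k, M (r i.castSucc) (r i.succ)) * (M a (r 0) * g a (r (Fin.last k))) := by
      intro a
      refine Finset.sum_congr rfl fun r _ => ?_
      simp only [Fin.castSucc_zero, Fin.cons_zero, Fin.cons_succ, ← Fin.succ_castSucc, ← Fin.succ_last]
      ring
    rw [Finset.sum_congr rfl fun a _ => h a]
    simp only [fun a => ih (fun b c => M a b * g a c)]
    refine Finset.sum_congr rfl fun a _ => ?_
    rw [Finset.sum_comm]
    refine Finset.sum_congr rfl fun b _ => ?_
    rw [pow_succ', Matrix.mul_apply, Finset.sum_mul]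
    refine Finset.sum_congr rfl fun c _ => ?_
    ring

theorem closed_walks {S A : Type*} [Fintype S] [DecidableEq S] [CommSemiring A] (M : Matrix S S A)
    (k : ℕ) (hk : 0 < k) : Matrix.trace (M ^ k) = ∑ r : Fin k → S, ∏ i : Fin k, M (r i) (r ⟨((i : ℕ) + 1) % k, Nat.mod_lt _ i.pos⟩) := by
  obtain ⟨k, rfl⟩ : ∃ j, k = j + 1 := ⟨k - 1, by omega⟩
  have := path_walks M k (fun a b => M b a)
  rw [pow_succ, Matrix.trace]
  simp only [Matrix.diag_apply, Matrix.mul_apply]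
  rw [← this]
  refine Finset.sum_congr rfl fun r _ => ?_
  rw [Fin.prod_univ_castSucc]
  congr 1
  · refine Finset.prod_congr rfl fun i _ => ?_
    congr 2
    ext
    simp only [Fin.val_succ, Fin.val_castSucc]
    rw [Nat.mod_eq_of_lt (by omega)]
  · congr 2
    ext
    simp

def Mx {A : Type*} [CommSemiring A] (L : ℕ) (x : Fin L → A) : Matrix (Fin L) (Fin L) A :=
  fun a b => if a.val = 0 then x b else if b.val + 1 = a.val then 1 else 0

noncomputable def cyc (L k : ℕ) : MvPolynomial (Fin L) ℕ :=
  Matrix.trace (Mx L (fun i => (MvPolynomial.X i : MvPolynomial (Fin L) ℕ)) ^ k)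

def nx {k : ℕ} (i : Fin k) : Fin k := ⟨((i : ℕ) + 1) % k, Nat.mod_lt _ i.pos⟩

def ValidR {L k q : ℕ} (R : Fin q → Fin k → Fin L) : Prop :=
  ∀ c i, (R c i).val = 0 ∨ (R c (nx i)).val + 1 = (R c i).val

def cntR {L k q : ℕ} (R : Fin q → Fin k → Fin L) (j : Fin L) : ℕ :=
  (Finset.univ.filter fun p : Fin q × Fin k => (R p.1 p.2).val = 0 ∧ R p.1 (nx p.2) = j).card

open Classical in
theorem coeff_ge (L k q : ℕ) (hk : 0 < k) (μ : Fin L →₀ ℕ) :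
    (Finset.univ.filter fun R : Fin q → Fin k → Fin L => ValidR R ∧ ∀ j, cntR R j = μ j).card
      ≤ MvPolynomial.coeff μ ((cyc L k) ^ q) := by
  unfold cyc
  rw [closed_walks _ _ hk, Fintype.sum_pow, MvPolynomial.coeff_sum, Finset.card_eq_sum_ones,
    Finset.sum_filter]
  refine Finset.sum_le_sum fun R _ => ?_
  split_ifs with h
  swap
  · exact Nat.zero_le _
  obtain ⟨hv, hc⟩ := h
  have h1 : ∏ c : Fin q, ∏ i : Fin k, Mx L (fun i => (MvPolynomial.X i : MvPolynomial (Fin L) ℕ)) (R c i)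
      (R c ⟨((i : ℕ) + 1) % k, Nat.mod_lt _ i.pos⟩) = MvPolynomial.monomial μ 1 := by
    have h2 : ∀ c i, Mx L (fun i => (MvPolynomial.X i : MvPolynomial (Fin L) ℕ)) (R c i)
      (R c ⟨((i : ℕ) + 1) % k, Nat.mod_lt _ i.pos⟩) =
        ∏ j : Fin L, if (R c i).val = 0 ∧ R c (nx i) = j then MvPolynomial.X j else 1 := by
      intro c i
      change Mx L _ (R c i) (R c (nx i)) = _
      unfold Mx
      by_cases h0 : (R c i).val = 0
      · simp [h0]
      · have := (hv c i).resolve_left h0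
        simp [h0, this]
    simp only [h2]
    rw [← Fintype.prod_prod_type' (fun c i => ∏ j : Fin L, if (R c i).val = 0 ∧ R c (nx i) = j then (MvPolynomial.X j : MvPolynomial (Fin L) ℕ) else 1)]
    rw [Finset.prod_comm, MvPolynomial.monomial_eq, Finsupp.prod_fintype]
    · simp only [map_one, one_mul]
      refine Finset.prod_congr rfl fun j _ => ?_
      rw [← hc j, cntR, Finset.prod_ite]
      simp
    · simp
  rw [h1]
  simp


section Arr
variable {I P : Type*} [Fintype I] [Fintype P] (len : I → ℕ) (s : P → P)

/-- forward arrangements -/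
def Fwd (g : (Σ c, Fin (len c)) ≃ P) : Prop :=
  ∀ c (a b : Fin (len c)), a.val + 1 = b.val → g ⟨c, b⟩ = s (g ⟨c, a⟩)

/-- arrangements with paths in any direction -/
def Und (g : (Σ c, Fin (len c)) ≃ P) : Prop :=
  ∀ c (a b : Fin (len c)), a.val + 1 = b.val → g ⟨c, b⟩ = s (g ⟨c, a⟩) ∨ g ⟨c, a⟩ = s (g ⟨c, b⟩)

theorem und_dir (hs : Function.Injective s) (g : (Σ c, Fin (len c)) ≃ P) (hg : Und len s g) (c : I) :
    (∀ (a b : Fin (len c)), a.val + 1 = b.val → g ⟨c, b⟩ = s (g ⟨c, a⟩)) ∨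
    (∀ (a b : Fin (len c)), a.val + 1 = b.val → g ⟨c, a⟩ = s (g ⟨c, b⟩)) := by
  have key : ∀ (a b d : Fin (len c)), a.val + 1 = b.val → b.val + 1 = d.val →
      (g ⟨c, b⟩ = s (g ⟨c, a⟩) → g ⟨c, d⟩ = s (g ⟨c, b⟩)) ∧ (g ⟨c, a⟩ = s (g ⟨c, b⟩) → g ⟨c, b⟩ = s (g ⟨c, d⟩)) := by
    intro a b d hab hbd
    have hne : g ⟨c, a⟩ ≠ g ⟨c, d⟩ := by
      intro h
      have := g.injective h
      simp only [Sigma.mk.injEq, heq_eq_eq, true_and] at this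
      have := congrArg Fin.val this
      omega
    constructor
    · intro h1
      rcases hg c b d hbd with h | h
      · exact h
      · exact absurd (hs (h1.symm.trans h)) hne
    · intro h1
      rcases hg c b d hbd with h | h
      · exact absurd (h1.trans h.symm) hne
      · exact h
  by_cases h2 : 2 ≤ len c
  swap
  · left; intro a b hab; have := b.2; omega
  rcases hg c ⟨0, by omega⟩ ⟨1, by omega⟩ rfl with h | h
  · left
    have : ∀ j (hj : j + 1 < len c), g ⟨c, ⟨j+1, hj⟩⟩ = s (g ⟨c, ⟨j, by omega⟩⟩) := by
      intro j
      induction j with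
      | zero => intro _; exact h
      | succ j ih =>
        intro hj
        exact (key ⟨j, by omega⟩ ⟨j+1, by omega⟩ ⟨j+2, hj⟩ rfl rfl).1 (ih (by omega))
    rintro ⟨a, ha⟩ ⟨b, hb⟩ hab
    simp only at hab
    subst hab
    exact this a hb
  · right
    have : ∀ j (hj : j + 1 < len c), g ⟨c, ⟨j, by omega⟩⟩ = s (g ⟨c, ⟨j+1, hj⟩⟩) := by
      intro j
      induction j with
      | zero => intro _; exact h
      | succ j ih =>
        intro hj
        exact (key ⟨j, by omega⟩ ⟨j+1, by omega⟩ ⟨j+2, hj⟩ rfl rfl).2 (ih (by omega))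
    rintro ⟨a, ha⟩ ⟨b, hb⟩ hab
    simp only at hab
    subst hab
    exact this a hb

def flipB (b : I → Bool) : (Σ c, Fin (len c)) ≃ (Σ c, Fin (len c)) :=
  Equiv.sigmaCongrRight fun c => if b c then Equiv.refl _ else Fin.revPerm

theorem card_und (hs : Function.Injective s) :
    Nat.card {g // Und len s g} ≤ 2 ^ Fintype.card I * Nat.card {g // Fwd len s g} := by
  classical
  have hex : ∀ g : {g // Und len s g}, ∃ b : I → Bool, Fwd len s ((flipB len b).trans g.1) := by
    intro g
    refine ⟨fun c => decide (∀ (a b : Fin (len c)), a.val + 1 = b.val → g.1 ⟨c, b⟩ = s (g.1 ⟨c, a⟩)), ?_⟩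
    intro c a b hab
    by_cases h : ∀ (a b : Fin (len c)), a.val + 1 = b.val → g.1 ⟨c, b⟩ = s (g.1 ⟨c, a⟩)
    · simp only [flipB, Equiv.trans_apply, Equiv.sigmaCongrRight_apply, Sigma.map, id]
      simp only [decide_eq_true h, if_true]
      exact h a b hab
    · have h' := (und_dir len s hs g.1 g.2 c).resolve_left h
      simp only [flipB, Equiv.trans_apply, Equiv.sigmaCongrRight_apply, Sigma.map, id]
      simp only [decide_eq_false h]
      refine h' b.rev a.rev ?_
      simp only [Fin.val_rev]
      omega
  choose b hb using hex
  have hinj : Function.Injective (fun g : {g // Und len s g} =>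
      ((b g, ⟨_, hb g⟩) : (I → Bool) × {g // Fwd len s g})) := by
    intro g h hgh
    simp only [Prod.mk.injEq, Subtype.mk.injEq] at hgh
    obtain ⟨h1, h2⟩ := hgh
    rw [h1] at h2
    apply Subtype.ext
    have := congrArg (fun e => (flipB len (b h)).symm.trans e) h2
    simpa [← Equiv.trans_assoc] using this
  have := Nat.card_le_card_of_injective _ hinj
  simpa [Nat.card_prod] using this

theorem card_fwd [DecidableEq P] (hlen : ∀ c, 0 < len c) (L : ℕ) (hL : ∀ c, len c ≤ L) (hs : Function.Injective s)
    (mu : Fin L → ℕ) (hmu : ∀ i : Fin L, mu i = Nat.card {c // len c = i.val + 1}) :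
    Nat.card {g // Fwd len s g} ≤ (∏ i, (mu i).factorial) *
      Nat.card {R : P → Fin L // (∀ p, (R p).val = 0 ∨ (R (s p)).val + 1 = (R p).val) ∧
        ∀ j, (Finset.univ.filter fun p => (R p).val = 0 ∧ R (s p) = j).card = mu j} := by
  classical
  let sE : P ≃ P := Equiv.ofBijective s (Finite.injective_iff_bijective.mp hs)
  have hsE : ∀ p, s (sE.symm p) = p := fun p => sE.apply_symm_apply p
  let R : {g // Fwd len s g} → P → Fin L := fun g p =>
    ⟨len (g.1.symm p).1 - 1 - (g.1.symm p).2.val, by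
      have := hL (g.1.symm p).1; have := hlen (g.1.symm p).1; omega⟩
  have hR : ∀ g c a, (R g (g.1 ⟨c, a⟩)).val = len c - 1 - a.val := by
    intro g c a
    have h : g.1.symm (g.1 ⟨c, a⟩) = ⟨c, a⟩ := g.1.symm_apply_apply _
    exact congrArg (fun y : (Σ c, Fin (len c)) => len y.1 - 1 - y.2.val) h
  have hval : ∀ g p, (R g p).val = 0 ∨ (R g (s p)).val + 1 = (R g p).val := by
    intro g p
    obtain ⟨⟨c, a⟩, rfl⟩ := g.1.surjective p
    by_cases h : a.val + 1 < len c
    · right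
      rw [← g.2 c a ⟨a.val + 1, h⟩ rfl, hR, hR]
      simp only
      omega
    · left
      rw [hR]
      omega
  have hstart : ∀ g p, (R g p).val = 0 → ∃ c, s p = g.1 ⟨c, ⟨0, hlen c⟩⟩ := by
    intro g p hp
    obtain ⟨⟨c, a⟩, ha⟩ := g.1.surjective (s p)
    refine ⟨c, ?_⟩
    by_cases h : a.val = 0
    · rw [← ha]
      congr
      exact Fin.ext h
    · exfalso
      have h1 := g.2 c ⟨a.val - 1, by omega⟩ a (by simp only; omega)
      rw [ha] at h1
      have h2 := hs h1
      rw [h2, hR] at hp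
      have := a.2
      simp only at hp
      omega
  have hpre : ∀ g c, (R g (sE.symm (g.1 ⟨c, ⟨0, hlen c⟩⟩))).val = 0 := by
    intro g c
    rcases hval g (sE.symm (g.1 ⟨c, ⟨0, hlen c⟩⟩)) with h | h
    · exact h
    · exfalso
      obtain ⟨⟨c', a⟩, ha⟩ := g.1.surjective (sE.symm (g.1 ⟨c, ⟨0, hlen c⟩⟩))
      rw [← ha, hR] at h
      have h3 := g.2 c' a ⟨a.val + 1, by omega⟩ rfl
      rw [ha, hsE] at h3
      have h4 := g.1.injective h3
      have h5 : c' = c := congrArg Sigma.fst h4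
      subst h5
      simp at h4
  let Z : (P → Fin L) → Fin L → Finset P := fun r j => Finset.univ.filter fun p => (r p).val = 0 ∧ r (s p) = j
  have hlift : ∀ g (j : Fin L) (c : {c // len c = j.val + 1}), sE.symm (g.1 ⟨c.1, ⟨0, hlen c.1⟩⟩) ∈ Z (R g) j := by
    intro g j c
    simp only [Z, Finset.mem_filter, Finset.mem_univ, true_and]
    refine ⟨hpre g c.1, ?_⟩
    rw [hsE]
    ext
    rw [hR]
    simp only
    have := c.2
    omega
  let emb : ∀ g (j : Fin L), {c // len c = j.val + 1} ↪ Z (R g) j := fun g j =>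
    ⟨fun c => ⟨_, hlift g j c⟩, by
      intro c d h
      simp only [Subtype.mk.injEq, EmbeddingLike.apply_eq_iff_eq, Sigma.mk.injEq] at h
      exact Subtype.ext h.1⟩
  have hcnt : ∀ g j, (Z (R g) j).card = mu j := by
    intro g j
    rw [hmu, ← Nat.card_eq_finsetCard]
    symm
    refine Nat.card_congr (Equiv.ofBijective (emb g j) ⟨(emb g j).injective, ?_⟩)
    rintro ⟨p, hp⟩
    simp only [Z, Finset.mem_filter, Finset.mem_univ, true_and] at hp
    obtain ⟨c, hc⟩ := hstart g p hp.1
    have h2 := congrArg Fin.val hp.2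
    rw [hc, hR] at h2
    refine ⟨⟨c, ?_⟩, ?_⟩
    · have := hlen c
      simp only at h2
      omega
    · apply Subtype.ext
      change sE.symm (g.1 ⟨c, ⟨0, _⟩⟩) = p
      rw [← hc]
      exact sE.symm_apply_apply p
  let X := {R : P → Fin L // (∀ p, (R p).val = 0 ∨ (R (s p)).val + 1 = (R p).val) ∧
        ∀ j, (Finset.univ.filter fun p => (R p).val = 0 ∧ R (s p) = j).card = mu j}
  let f : {g // Fwd len s g} → Σ r : X, ∀ j : Fin L, {c // len c = j.val + 1} ↪ Z r.1 j :=
    fun g => ⟨⟨R g, hval g, hcnt g⟩, emb g⟩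
  have hf : Function.Injective f := by
    intro g h hgh
    have hst : ∀ c, g.1 ⟨c, ⟨0, hlen c⟩⟩ = h.1 ⟨c, ⟨0, hlen c⟩⟩ := by
      intro c
      let ev : (Σ r : X, ∀ j : Fin L, {c // len c = j.val + 1} ↪ Z r.1 j) → P := fun y =>
        (y.2 ⟨len c - 1, by have := hL c; have := hlen c; omega⟩ ⟨c, by have := hlen c; simp only; omega⟩).1
      have := congrArg ev hgh
      exact sE.symm.injective this
    apply Subtype.ext
    apply Equiv.ext
    rintro ⟨c, ⟨a, ha⟩⟩
    induction a with
    | zero => exact hst c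
    | succ a ih =>
      rw [g.2 c ⟨a, by omega⟩ ⟨a+1, ha⟩ rfl, h.2 c ⟨a, by omega⟩ ⟨a+1, ha⟩ rfl, ih]
  have h1 := Nat.card_le_card_of_injective f hf
  refine h1.trans ?_
  rw [Nat.card_sigma]
  have h2 : ∀ r : X, Nat.card (∀ j : Fin L, {c // len c = j.val + 1} ↪ Z r.1 j) = ∏ i, (mu i).factorial := by
    intro r
    rw [Nat.card_pi]
    refine Finset.prod_congr rfl fun j _ => ?_
    rw [Nat.card_eq_fintype_card, Fintype.card_embedding_eq]
    have e1 : Fintype.card (Z r.1 j) = mu j := by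
      rw [Fintype.card_coe]
      exact r.2.2 j
    have e2 : Fintype.card {c // len c = j.val + 1} = mu j := by
      rw [hmu, Nat.card_eq_fintype_card]
    rw [e1, e2, Nat.descFactorial_self]
  simp only [h2]
  rw [Finset.sum_const, smul_eq_mul, mul_comm, Finset.card_univ, Nat.card_eq_fintype_card]
end Arr


theorem NS_le {n m k L : ℕ} (hk : 0 < k) (S : SimpleGraph (Fin n)) (hS : PathsGraph S m)
    (hL : ∀ c : S.ConnectedComponent, c.supp.ncard ≤ L) (mu : Fin L →₀ ℕ)
    (hmu : ∀ i : Fin L, mu i = Nat.card {c : S.ConnectedComponent // c.supp.ncard = i.val + 1}) :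
    NS k S ≤ 2 ^ m * ((∏ i, (mu i).factorial) * MvPolynomial.coeff mu ((cyc L k) ^ (n / k))) := by
  classical
  obtain ⟨hm, hpath⟩ := hS
  have : Finite S.ConnectedComponent := inferInstance
  have : Fintype S.ConnectedComponent := Fintype.ofFinite _
  choose len v hlen hinj hran hadj using hpath
  have hcard : ∀ c : S.ConnectedComponent, c.supp.ncard = len c := by
    intro c
    rw [← hran c, ← Set.image_univ, Set.ncard_image_of_injective _ (hinj c), Set.ncard_univ]
    simp
  have hmem : ∀ c a, S.connectedComponentMk (v c a) = c := by
    intro c a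
    have : v c a ∈ c.supp := by rw [← hran c]; exact ⟨a, rfl⟩
    exact this
  let e : (Σ c, Fin (len c)) ≃ Fin n := Equiv.ofBijective (fun y => v y.1 y.2) ⟨by
    rintro ⟨c, a⟩ ⟨d, b⟩ h
    simp only at h
    have h1 : c = d := by rw [← hmem c a, h, hmem]
    subst h1
    rw [hinj c h], by
    intro x
    have : x ∈ (S.connectedComponentMk x).supp := rfl
    rw [← hran] at this
    obtain ⟨a, ha⟩ := this
    exact ⟨⟨_, a⟩, ha⟩⟩
  let s : Fin (n / k) × Fin k → Fin (n / k) × Fin k := fun p => (p.1, nx p.2)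
  have hs : Function.Injective s := by
    rintro ⟨c, i⟩ ⟨d, j⟩ h
    simp only [s, Prod.mk.injEq, nx, Fin.mk.injEq] at h
    refine Prod.ext h.1 (Fin.ext ?_)
    have h2 := h.2
    have hi := i.2
    have hj := j.2
    by_cases h3 : i.val + 1 < k
    · by_cases h4 : j.val + 1 < k
      · rw [Nat.mod_eq_of_lt h3, Nat.mod_eq_of_lt h4] at h2
        simp only; omega
      · have : j.val + 1 = k := by omega
        rw [Nat.mod_eq_of_lt h3, this, Nat.mod_self] at h2
        omega
    · by_cases h4 : j.val + 1 < k
      · have : i.val + 1 = k := by omega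
        rw [Nat.mod_eq_of_lt h4, this, Nat.mod_self] at h2
        omega
      · simp only; omega
  have step1 : NS k S ≤ Nat.card {g // Und len s g} := by
    let Fe : RODFactor n k → (Fin (n / k) × Fin k ≃ Fin n) := fun F => Equiv.ofBijective _ F.2
    have hFe : ∀ F p, Fe F p = F.1 p.1 p.2 := fun F p => rfl
    let f : {F : RODFactor n k // RODContains F S} → {g // Und len s g} := fun F =>
      ⟨e.trans (Fe F.1).symm, by
        intro c a b hab
        have h1 : S.Adj (v c a) (v c b) := (hadj c a b).2 (Or.inl hab)
        obtain ⟨d, i, h | h⟩ := F.2 _ _ h1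
        · left
          have e1 : (Fe F.1).symm (v c a) = (d, i) := by
            rw [Equiv.symm_apply_eq, hFe]; exact h.1.symm
          have e2 : (Fe F.1).symm (v c b) = (d, nx i) := by
            rw [Equiv.symm_apply_eq, hFe]; exact h.2.symm
          change (Fe F.1).symm (v c b) = s ((Fe F.1).symm (v c a))
          rw [e1, e2]
        · right
          have e1 : (Fe F.1).symm (v c b) = (d, i) := by
            rw [Equiv.symm_apply_eq, hFe]; exact h.1.symm
          have e2 : (Fe F.1).symm (v c a) = (d, nx i) := by
            rw [Equiv.symm_apply_eq, hFe]; exact h.2.symm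
          change (Fe F.1).symm (v c a) = s ((Fe F.1).symm (v c b))
          rw [e1, e2]⟩
    refine Nat.card_le_card_of_injective f ?_
    intro F G h
    have h1 : e.trans (Fe F.1).symm = e.trans (Fe G.1).symm := congrArg Subtype.val h
    have h2 : (Fe F.1).symm = (Fe G.1).symm := by
      ext1 x
      have := congrArg (fun g => g (e.symm x)) h1
      simpa using this
    have h3 : Fe F.1 = Fe G.1 := by
      rw [← Equiv.symm_symm (Fe F.1), h2, Equiv.symm_symm]
    apply Subtype.ext
    apply Subtype.ext
    funext c i
    rw [← hFe F.1 (c, i), h3]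
    exact hFe G.1 (c, i)
  have step2 := card_und len s hs
  have step3 := card_fwd len s (fun c => by have := hlen c; omega) L (fun c => (hcard c) ▸ hL c) hs mu (by
    intro i
    rw [hmu]
    simp only [hcard])
  have hm' : Fintype.card S.ConnectedComponent = m := by rw [← hm, Nat.card_eq_fintype_card]
  rw [hm'] at step2
  refine step1.trans (step2.trans (Nat.mul_le_mul_left _ (step3.trans (Nat.mul_le_mul_left _ ?_))))
  refine le_trans ?_ (coeff_ge L k (n / k) hk mu)
  rw [Nat.card_eq_fintype_card, Fintype.card_subtype]
  refine Finset.card_le_card_of_injOn (fun R c i => R (c, i)) ?_ ?_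
  · intro R hR
    simp only [Finset.coe_filter, Finset.mem_univ, true_and, Set.mem_ofPred_eq] at hR ⊢
    refine ⟨fun c i => hR.1 (c, i), fun j => ?_⟩
    rw [← hR.2 j]
    rfl
  · intro R _ R' _ h
    funext p
    exact congrFun (congrFun h p.1) p.2


section HB
variable {A : Type*} [CommSemiring A] {L : ℕ} (x : Fin L → A)

def xe (j : ℕ) : A := if h : j < L then x ⟨j, h⟩ else 0

theorem xe_val (i : Fin L) : xe x i.val = x i := by simp [xe]

theorem xe_ge {j : ℕ} (h : L ≤ j) : xe x j = 0 := by simp [xe, not_lt.mpr h]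

def hh : ℕ → A
  | 0 => 1
  | (j+1) => ∑ i : Fin (j+1), xe x i.val * hh (j - i.val)
decreasing_by omega

theorem hh_zero : hh x 0 = 1 := by rw [hh]

theorem hh_succ (j : ℕ) : hh x (j+1) = ∑ i ∈ range (j+1), xe x i * hh x (j - i) := by
  rw [hh, Finset.sum_range]

theorem hh_succ' (j : ℕ) : hh x (j+1) = ∑ i ∈ range (j+1), hh x i * xe x (j - i) := by
  rw [hh_succ, ← Finset.sum_range_reflect]
  refine Finset.sum_congr rfl fun i hi => ?_
  have := Finset.mem_range.mp hi
  rw [mul_comm]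
  congr 2 <;> omega

theorem Mx_pow_row (j : ℕ) (a b : Fin L) (ha : a.val = 0) :
    (Mx L x ^ (j+1)) a b = ∑ i ∈ range (j+1), hh x i * xe x (b.val + (j - i)) := by
  induction j generalizing b with
  | zero => simp [Mx, ha, hh_zero, xe]
  | succ j ih =>
    rw [pow_succ, Matrix.mul_apply, Finset.sum_range_succ]
    have h0 : ∀ c : Fin L, (Mx L x ^ (j+1)) a c * Mx L x c b =
        (if c = a then (Mx L x ^ (j+1)) a c * x b else 0) + (if b.val + 1 = c.val then (Mx L x ^ (j+1)) a c else 0) := by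
      intro c
      by_cases hc : c = a
      · have : c.val = 0 := by rw [hc, ha]
        simp [Mx, hc, ha]
      · have : c.val ≠ 0 := fun h => hc (Fin.ext (h.trans ha.symm))
        simp only [Mx, this, if_false, if_neg hc, zero_add]
        split_ifs <;> simp
    rw [Finset.sum_congr rfl fun c _ => h0 c, Finset.sum_add_distrib, Finset.sum_ite_eq' , if_pos (Finset.mem_univ _), ih, add_comm]
    congr 1
    · by_cases hb : b.val + 1 < L
      · have h1 : ∀ c : Fin L, (b.val + 1 = c.val) ↔ (c = ⟨b.val + 1, hb⟩) := fun c => by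
          rw [Fin.ext_iff]; simp only; omega
        simp only [h1, Finset.sum_ite_eq', Finset.mem_univ, if_true]
        rw [ih]
        refine Finset.sum_congr rfl fun i hi => ?_
        have := Finset.mem_range.mp hi
        congr 2
        simp only
        omega
      · rw [Finset.sum_eq_zero, Finset.sum_eq_zero]
        · intro i hi
          have := Finset.mem_range.mp hi
          rw [xe_ge x (by omega), mul_zero]
        · intro c _
          rw [if_neg]
          have := c.2
          omega
    · rw [hh_succ']
      simp [ha, xe_val]

theorem Mx_pow_shift (t : ℕ) : ∀ (j : ℕ) (a c b : Fin L), c.val + t = a.val → (Mx L x ^ (j+t)) a b = (Mx L x ^ j) c b := by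
  induction t with
  | zero => intro j a c b h; rw [show c = a from Fin.ext h]; rfl
  | succ t ih =>
    intro j a c b h
    have ha : a.val - 1 < L := by omega
    rw [← ih j ⟨a.val - 1, ha⟩ c b (by simp only; omega), ← add_assoc, pow_succ', Matrix.mul_apply]
    rw [Finset.sum_eq_single ⟨a.val - 1, ha⟩]
    · have h1 : a.val ≠ 0 := by omega
      have h2 : a.val - 1 + 1 = a.val := by omega
      simp [Mx, h1, h2]
    · intro d _ hd
      have h1 : a.val ≠ 0 := by omega
      have h2 : d.val + 1 ≠ a.val := fun h => hd (Fin.ext (by simp only; omega))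
      simp [Mx, h1, h2]
    · simp

theorem trace_Mx (k : ℕ) : Matrix.trace (Mx L x ^ (k+1)) = ∑ i ∈ range (k+1), (((i:ℕ) + 1 : ℕ) : A) * (xe x i * hh x (k - i)) := by
  have hd : ∀ a : Fin L, (Mx L x ^ (k+1)) a a = ∑ i ∈ range (k+1), if a.val ≤ i then xe x i * hh x (k-i) else 0 := by
    intro a
    have hL : 0 < L := a.pos
    by_cases h : a.val ≤ k
    · have h1 : k + 1 = (k - a.val + 1) + a.val := by omega
      conv_lhs => rw [h1]
      rw [Mx_pow_shift x a.val (k - a.val + 1) a ⟨0, hL⟩ a (by simp), Mx_pow_row x _ _ _ rfl]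
      rw [← Finset.sum_filter]
      symm
      refine Finset.sum_bij' (fun i _ => k - i) (fun i _ => k - i) ?_ ?_ ?_ ?_ ?_
      · intro i hi; simp only [Finset.mem_filter, Finset.mem_range] at hi ⊢; omega
      · intro i hi; simp only [Finset.mem_filter, Finset.mem_range] at hi ⊢; omega
      · intro i hi; simp only [Finset.mem_filter, Finset.mem_range] at hi ⊢; omega
      · intro i hi; simp only [Finset.mem_filter, Finset.mem_range] at hi ⊢; omega
      · intro i hi; simp only [Finset.mem_filter, Finset.mem_range] at hi ⊢
        rw [mul_comm]
        congr 2
        omega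
    · rw [← zero_add (k+1), Mx_pow_shift x (k+1) 0 a ⟨a.val - (k+1), by omega⟩ a (by simp only; omega)]
      rw [pow_zero, Matrix.one_apply_ne, Finset.sum_eq_zero]
      · intro i hi
        have := Finset.mem_range.mp hi
        rw [if_neg]; omega
      · intro h'
        have := congrArg Fin.val h'
        simp only at this
        omega
  rw [Matrix.trace]
  simp only [Matrix.diag_apply, hd]
  rw [Finset.sum_comm]
  refine Finset.sum_congr rfl fun i _ => ?_
  by_cases hi : i < L
  · rw [← Finset.sum_filter, Finset.sum_const, nsmul_eq_mul]
    congr 2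
    have : (Finset.univ.filter fun a : Fin L => a.val ≤ i) = Finset.Iic ⟨i, hi⟩ := by
      ext a; simp [Fin.le_def]
    rw [this, Fin.card_Iic]
  · rw [xe_ge x (not_lt.mp hi)]
    simp
end HB

section CoefB
variable {L : ℕ}
open MvPolynomial

theorem coeff_X_mul_fact (μ : Fin L →₀ ℕ) (i : Fin L) (H : MvPolynomial (Fin L) ℕ) :
    coeff μ (X i * H) * ∏ j, (μ j).factorial =
      μ i * (coeff (μ - Finsupp.single i 1) H * ∏ j, ((μ - Finsupp.single i 1 : Fin L →₀ ℕ) j).factorial) := by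
  classical
  rw [coeff_X_mul']
  by_cases h : μ i = 0
  · simp [h]
  · rw [if_pos (by simpa using h)]
    rw [← Finset.mul_prod_erase _ _ (Finset.mem_univ i), ← Finset.mul_prod_erase (a := i) _ _ (Finset.mem_univ i)]
    have h1 : ∏ x ∈ univ.erase i, ((μ - Finsupp.single i 1 : Fin L →₀ ℕ) x).factorial = ∏ x ∈ univ.erase i, (μ x).factorial := by
      refine Finset.prod_congr rfl fun j hj => ?_
      have := Finset.ne_of_mem_erase hj
      simp [Finsupp.single_apply, this.symm]
    rw [h1]
    obtain ⟨t, ht⟩ := Nat.exists_eq_succ_of_ne_zero h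
    simp only [Finsupp.coe_tsub, Pi.sub_apply, Finsupp.single_eq_same, ht, Nat.succ_eq_add_one, Nat.add_sub_cancel, Nat.factorial_succ]
    ring

def wt (μ : Fin L →₀ ℕ) : ℕ := ∑ i, (i.val + 1) * μ i
def sz (μ : Fin L →₀ ℕ) : ℕ := ∑ i, μ i

theorem wt_sub (μ : Fin L →₀ ℕ) (i : Fin L) (h : μ i ≠ 0) : wt (μ - Finsupp.single i 1) + (i.val + 1) = wt μ := by
  unfold wt
  rw [← Finset.add_sum_erase _ _ (Finset.mem_univ i), ← Finset.add_sum_erase (a := i) _ _ (Finset.mem_univ i)]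
  have h1 : ∑ x ∈ univ.erase i, (x.val+1) * ((μ - Finsupp.single i 1 : Fin L →₀ ℕ) x) = ∑ x ∈ univ.erase i, (x.val+1) * (μ x) := by
    refine Finset.sum_congr rfl fun j hj => ?_
    have := Finset.ne_of_mem_erase hj
    simp [Finsupp.single_apply, this.symm]
  rw [h1]
  obtain ⟨t, ht⟩ := Nat.exists_eq_succ_of_ne_zero h
  simp only [Finsupp.coe_tsub, Pi.sub_apply, Finsupp.single_eq_same, ht, Nat.succ_eq_add_one, Nat.add_sub_cancel]
  ring

theorem sz_sub (μ : Fin L →₀ ℕ) (i : Fin L) (h : μ i ≠ 0) : sz (μ - Finsupp.single i 1) + 1 = sz μ := by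
  unfold sz
  rw [← Finset.add_sum_erase _ _ (Finset.mem_univ i), ← Finset.add_sum_erase (a := i) _ _ (Finset.mem_univ i)]
  have h1 : ∑ x ∈ univ.erase i, ((μ - Finsupp.single i 1 : Fin L →₀ ℕ) x) = ∑ x ∈ univ.erase i, (μ x) := by
    refine Finset.sum_congr rfl fun j hj => ?_
    have := Finset.ne_of_mem_erase hj
    simp [Finsupp.single_apply, this.symm]
  rw [h1]
  obtain ⟨t, ht⟩ := Nat.exists_eq_succ_of_ne_zero h
  simp only [Finsupp.coe_tsub, Pi.sub_apply, Finsupp.single_eq_same, ht, Nat.succ_eq_add_one, Nat.add_sub_cancel]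
  ring

theorem sum_xe_range (k : ℕ) (μ : Fin L →₀ ℕ) (hw : wt μ = k + 1)
    (H : ℕ → MvPolynomial (Fin L) ℕ) (w : ℕ → ℕ)
    (hH : ∀ i : Fin L, μ i ≠ 0 → coeff (μ - Finsupp.single i 1) (H (k - i.val)) * ∏ j, ((μ - Finsupp.single i 1 : Fin L →₀ ℕ) j).factorial = (sz μ - 1).factorial) :
    (∑ i ∈ range (k+1), w i * coeff μ (xe X i * H (k - i))) * ∏ j, (μ j).factorial = (∑ i : Fin L, w i.val * μ i) * (sz μ - 1).factorial := by
  have hbig : ∀ i : Fin L, k + 1 ≤ i.val → μ i = 0 := by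
    intro i hi
    by_contra h
    have := wt_sub μ i h
    omega
  have h1 : ∑ i ∈ range (k+1), w i * coeff μ (xe X i * H (k - i)) * ∏ j, (μ j).factorial =
      ∑ i ∈ range (k+1), (if h : i < L then w i * μ ⟨i, h⟩ else 0) * (sz μ - 1).factorial := by
    refine Finset.sum_congr rfl fun i _ => ?_
    by_cases h : i < L
    · have := coeff_X_mul_fact μ ⟨i, h⟩ (H (k - i))
      simp only [h, dif_pos, xe]
      rw [mul_assoc, this]
      by_cases h0 : μ ⟨i, h⟩ = 0
      · simp [h0]
      · rw [hH ⟨i, h⟩ h0]; ring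
    · simp [h, xe]
  rw [Finset.sum_mul, h1, ← Finset.sum_mul]
  congr 1
  have h2 : ∀ N, L ≤ N → ∑ i ∈ range N, (if h : i < L then w i * μ ⟨i, h⟩ else 0) = ∑ i : Fin L, w i.val * μ i := by
    intro N hN
    rw [← Finset.sum_subset (Finset.range_subset_range.mpr hN)]
    · rw [Finset.sum_range]
      refine Finset.sum_congr rfl fun i _ => ?_
      simp
    · intro i _ hi
      simp only [Finset.mem_range] at hi
      simp [hi]
  rw [← h2 (k + 1 + L) (by omega)]
  refine Finset.sum_subset (Finset.range_subset_range.mpr (by omega)) ?_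
  intro i _ hi
  simp only [Finset.mem_range, not_lt] at hi
  split_ifs with h
  · rw [hbig ⟨i, h⟩ hi]; simp
  · rfl

theorem coeff_hh (j : ℕ) : ∀ μ : Fin L →₀ ℕ, wt μ = j →
    coeff μ (hh (X : Fin L → MvPolynomial (Fin L) ℕ) j) * ∏ i, (μ i).factorial = (sz μ).factorial := by
  induction j using Nat.strong_induction_on with
  | _ j ih =>
    intro μ hw
    cases j with
    | zero =>
      have : μ = 0 := by
        ext i
        by_contra h
        have := wt_sub μ i h
        omega
      subst this
      simp [hh_zero, sz]
    | succ k =>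
      have hpos : sz μ ≠ 0 := by
        intro h
        have : ∀ i, μ i = 0 := by
          intro i
          have := (Finset.sum_eq_zero_iff.mp h) i (Finset.mem_univ i)
          exact this
        have : wt μ = 0 := by simp [wt, this]
        omega
      have := sum_xe_range k μ hw (hh X) (fun _ => 1) (by
        intro i hi
        have h1 := wt_sub μ i hi
        have h2 := sz_sub μ i hi
        rw [ih (k - i.val) (by omega) _ (by omega)]
        congr 1
        omega)
      rw [hh_succ, coeff_sum]
      simp only [one_mul] at this
      rw [this]
      change sz μ * _ = _
      exact Nat.mul_factorial_pred hpos

theorem coeff_cyc (μ : Fin L →₀ ℕ) (hpos : 0 < wt μ) :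
    coeff μ (cyc L (wt μ)) * ∏ i, (μ i).factorial = wt μ * (sz μ - 1).factorial := by
  obtain ⟨k, hk⟩ : ∃ k, wt μ = k + 1 := ⟨wt μ - 1, by omega⟩
  have := sum_xe_range k μ hk (hh X) (fun i => i + 1) (by
        intro i hi
        have h1 := wt_sub μ i hi
        have h2 := sz_sub μ i hi
        rw [coeff_hh (k - i.val) _ (by omega)]
        congr 1
        omega)
  rw [cyc, hk, trace_Mx, coeff_sum]
  change _ = wt μ * _ at this
  rw [hk] at this
  rw [← this]
  congr 1
  refine Finset.sum_congr rfl fun i _ => ?_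
  rw [← nsmul_eq_mul, coeff_smul, smul_eq_mul]
end CoefB


section NewtonC
open PowerSeries

theorem newton_E (Λ : Multiset ℂ) :
    PowerSeries.derivative ℂ (Λ.map fun l => (1 - PowerSeries.C l * X : PowerSeries ℂ)).prod =
      - ((Λ.map fun l => (1 - PowerSeries.C l * X : PowerSeries ℂ)).prod * (Λ.map fun l => PowerSeries.mk fun k => l ^ (k+1)).sum) := by
  induction Λ using Multiset.induction_on with
  | empty => simp
  | cons l Λ ih =>
    simp only [Multiset.map_cons, Multiset.prod_cons, Multiset.sum_cons]
    have h1 : (1 - PowerSeries.C l * X : PowerSeries ℂ) * PowerSeries.mk (fun k => l ^ (k+1)) = PowerSeries.C l := by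
      ext j
      rw [sub_mul, one_mul, mul_assoc]
      cases j with
      | zero => simp
      | succ j => simp [PowerSeries.coeff_succ_X_mul]; ring
    have h2 : PowerSeries.derivative ℂ (1 - PowerSeries.C l * X : PowerSeries ℂ) = - PowerSeries.C l := by
      simp [PowerSeries.derivative_C]
    rw [Derivation.leibniz, ih, h2, smul_eq_mul, smul_eq_mul]
    linear_combination (- (Multiset.map (fun l => (1 - PowerSeries.C l * X : PowerSeries ℂ)) Λ).prod) * h1.symm
end NewtonC

theorem newton_roots (L : ℕ) (x : Fin L → ℂ) : ∃ Λ : Multiset ℂ, Multiset.card Λ = L ∧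
    (∀ z : ℂ, (Λ.map fun l => 1 - l * z).prod = 1 - ∑ i, x i * z ^ (i.val + 1)) ∧
    ∀ k, 0 < k → Matrix.trace (Mx L x ^ k) = (Λ.map fun l => l ^ k).sum := by
  classical
  let f : Polynomial ℂ := Polynomial.X ^ L - ∑ i : Fin L, Polynomial.C (x i) * Polynomial.X ^ (L - 1 - i.val)
  have hdeg : (∑ i : Fin L, Polynomial.C (x i) * Polynomial.X ^ (L - 1 - i.val)).degree < (L : WithBot ℕ) := by
    refine lt_of_le_of_lt (Polynomial.degree_sum_le _ _) ?_
    rw [Finset.sup_lt_iff]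
    · intro i _
      refine lt_of_le_of_lt (Polynomial.degree_C_mul_X_pow_le _ _) ?_
      have := i.2
      exact_mod_cast (by omega : L - 1 - i.val < L)
    · exact WithBot.bot_lt_coe L
  have hmon : f.Monic := Polynomial.monic_X_pow_sub hdeg
  have hnd : f.natDegree = L := by
    apply Polynomial.natDegree_eq_of_degree_eq_some
    rw [Polynomial.degree_sub_eq_left_of_degree_lt]
    · simp
    · simpa using hdeg
  have hsp : f.Splits := IsAlgClosed.splits f
  have hcard : Multiset.card f.roots = L := by
    rw [← hsp.natDegree_eq_card_roots, hnd]
  have hprod : f = (f.roots.map fun a => Polynomial.X - Polynomial.C a).prod := by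
    conv_lhs => rw [hsp.eq_prod_roots]
    rw [hmon.leadingCoeff]; simp
  have heval : ∀ z : ℂ, (f.roots.map fun l => 1 - l * z).prod = 1 - ∑ i, x i * z ^ (i.val + 1) := by
    intro z
    by_cases hz : z = 0
    · subst hz; simp
    · have h1 : f.eval z⁻¹ = (f.roots.map fun a => z⁻¹ - a).prod := by
        conv_lhs => rw [hprod]
        rw [Polynomial.eval_multiset_prod, Multiset.map_map]
        simp
      have h2 : f.eval z⁻¹ = z⁻¹ ^ L - ∑ i : Fin L, x i * z⁻¹ ^ (L - 1 - i.val) := by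
        simp [f, Polynomial.eval_finsetSum]
      have h3 : (f.roots.map fun l => 1 - l * z).prod = z ^ L * (f.roots.map fun a => z⁻¹ - a).prod := by
        rw [← hcard, ← Multiset.prod_replicate, ← Multiset.map_const', ← Multiset.prod_map_mul]
        congr 1
        refine Multiset.map_congr rfl fun a _ => ?_
        field_simp
      rw [h3, ← h1, h2, mul_sub, Finset.mul_sum, ← mul_pow, mul_inv_cancel₀ hz, one_pow]
      congr 1
      refine Finset.sum_congr rfl fun i _ => ?_
      have hi := i.2
      have : z ^ L = z ^ (i.val + 1) * z ^ (L - 1 - i.val) := by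
        rw [← pow_add]; congr 1; omega
      rw [this, inv_pow]
      field_simp
  refine ⟨f.roots, hcard, heval, ?_⟩
  have hE : (f.roots.map fun l => (1 - Polynomial.C l * Polynomial.X : Polynomial ℂ)).prod =
      1 - ∑ i, Polynomial.C (x i) * Polynomial.X ^ (i.val + 1) := by
    apply Polynomial.funext
    intro z
    rw [Polynomial.eval_multiset_prod, Multiset.map_map]
    have := heval z
    simp only [Polynomial.eval_sub, Polynomial.eval_one, Polynomial.eval_finsetSum, Polynomial.eval_mul, Polynomial.eval_C, Polynomial.eval_pow, Polynomial.eval_X, Function.comp_def]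
    exact this
  have hE2 : (f.roots.map fun l => (1 - PowerSeries.C l * PowerSeries.X : PowerSeries ℂ)).prod =
      1 - PowerSeries.X * PowerSeries.mk (xe x) := by
    have := congrArg (Polynomial.coeToPowerSeries.ringHom) hE
    rw [map_multiset_prod, Multiset.map_map] at this
    simp only [map_sub, map_one, map_mul, Polynomial.coeToPowerSeries.ringHom_apply, Polynomial.coe_C, Polynomial.coe_X, Function.comp_def] at this
    rw [this]
    congr 1
    ext j
    simp only [Polynomial.coeff_coe, Polynomial.finsetSum_coeff, Polynomial.coeff_C_mul, Polynomial.coeff_X_pow]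
    cases j with
    | zero => simp
    | succ j =>
      rw [PowerSeries.coeff_succ_X_mul, PowerSeries.coeff_mk]
      by_cases hj : j < L
      · rw [Finset.sum_eq_single ⟨j, hj⟩]
        · simp [xe, hj]
        · intro b _ hb
          have : j + 1 ≠ b.val + 1 := fun h => hb (Fin.ext (by simp only; omega))
          rw [if_neg this, mul_zero]
        · simp
      · rw [Finset.sum_eq_zero]
        · simp [xe, hj]
        · intro b _
          have := b.2
          rw [if_neg (by omega)]; simp
  have hN := newton_E f.roots
  rw [hE2] at hN
  have hH : PowerSeries.mk (hh x) * (1 - PowerSeries.X * PowerSeries.mk (xe x)) = 1 := by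
    have : PowerSeries.mk (hh x) = 1 + PowerSeries.X * (PowerSeries.mk (xe x) * PowerSeries.mk (hh x)) := by
      ext j
      cases j with
      | zero => simp [hh_zero]
      | succ j =>
        rw [map_add, PowerSeries.coeff_succ_X_mul, PowerSeries.coeff_mk, hh_succ, PowerSeries.coeff_mul,
          Finset.Nat.sum_antidiagonal_eq_sum_range_succ_mk]
        simp
    linear_combination this
  have hT : (f.roots.map fun l => PowerSeries.mk fun k => l ^ (k+1)).sum =
      PowerSeries.derivative ℂ (PowerSeries.X * PowerSeries.mk (xe x)) * PowerSeries.mk (hh x) := by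
    rw [map_sub] at hN
    have h0 : PowerSeries.derivative ℂ (1 : PowerSeries ℂ) = 0 := by simp
    rw [h0] at hN
    linear_combination (PowerSeries.mk (hh x)) * hN - (f.roots.map fun l => PowerSeries.mk fun k => l ^ (k+1)).sum * hH
  intro k hk
  obtain ⟨j, rfl⟩ : ∃ j, k = j + 1 := ⟨k - 1, by omega⟩
  have h4 := congrArg (PowerSeries.coeff j) hT
  rw [map_multiset_sum, Multiset.map_map] at h4
  simp only [Function.comp_def, PowerSeries.coeff_mk] at h4
  rw [h4, trace_Mx, PowerSeries.coeff_mul, Finset.Nat.sum_antidiagonal_eq_sum_range_succ_mk]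
  refine Finset.sum_congr rfl fun i _ => ?_
  rw [PowerSeries.coeff_derivative, PowerSeries.coeff_succ_X_mul]
  simp
  ring


section FourierD
open MvPolynomial

theorem aeval_cyc (L k : ℕ) (hk : 0 < k) (y : Fin L → ℂ) : aeval y (cyc L k) = Matrix.trace (Mx L y ^ k) := by
  unfold cyc
  rw [closed_walks _ _ hk, closed_walks _ _ hk, map_sum]
  refine Finset.sum_congr rfl fun r _ => ?_
  rw [map_prod]
  refine Finset.prod_congr rfl fun i _ => ?_
  unfold Mx
  split_ifs <;> simp

theorem totalDegree_cyc (L k : ℕ) (hk : 0 < k) : (cyc L k).totalDegree ≤ k := by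
  unfold cyc
  rw [closed_walks _ _ hk]
  refine totalDegree_finsetSum_le fun r _ => ?_
  refine (totalDegree_finsetProd _ _).trans ?_
  refine (Finset.sum_le_card_nsmul _ _ 1 ?_).trans ?_
  · intro i _
    unfold Mx
    split_ifs <;> simp
  · simp

theorem sum_root_pow {Q : ℕ} (ζ : ℂ) (h1 : ζ ^ Q = 1) (hne : ζ ≠ 1) : ∑ t : Fin Q, ζ ^ t.val = 0 := by
  rw [← Finset.sum_range (fun t => ζ ^ t)]
  have := geom_sum_mul ζ Q
  rw [h1, sub_self] at this
  exact (mul_eq_zero.mp this).resolve_right (sub_ne_zero.mpr hne)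

theorem fourier_coeff (L Q : ℕ) (hQ : 0 < Q) (ω : ℂ) (hω : IsPrimitiveRoot ω Q) (f : MvPolynomial (Fin L) ℕ)
    (μ : Fin L →₀ ℕ) (hμ : ∀ i, μ i < Q) (hf : ∀ s ∈ f.support, ∀ i, s i < Q) (p : Fin L → ℂ) :
    ∑ θ : Fin L → Fin Q, (∏ i, (ω⁻¹ ^ μ i) ^ (θ i).val) * aeval (fun i => p i * ω ^ (θ i).val) f =
      (Q : ℂ) ^ L * ((coeff μ f : ℕ) : ℂ) * ∏ i, p i ^ μ i := by
  classical
  have hω0 : ω ≠ 0 := hω.ne_zero hQ.ne'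
  have h1 : ∀ θ : Fin L → Fin Q, (∏ i, (ω⁻¹ ^ μ i) ^ (θ i).val) * aeval (fun i => p i * ω ^ (θ i).val) f =
      ∑ s ∈ f.support, ((coeff s f : ℕ) : ℂ) * (∏ i, p i ^ s i) * ∏ i, (ω ^ s i * ω⁻¹ ^ μ i) ^ (θ i).val := by
    intro θ
    rw [aeval_def, eval₂_eq', Finset.mul_sum]
    refine Finset.sum_congr rfl fun s _ => ?_
    simp only [mul_pow, Finset.prod_mul_distrib, eq_natCast]
    have : ∏ i, (ω ^ (θ i).val) ^ s i = ∏ i, (ω ^ s i) ^ (θ i).val := by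
      refine Finset.prod_congr rfl fun i _ => ?_
      rw [← pow_mul, ← pow_mul, mul_comm]
    rw [this]
    ring
  simp only [h1]
  rw [Finset.sum_comm]
  have h2 : ∀ s ∈ f.support, ∑ θ : Fin L → Fin Q, ((coeff s f : ℕ) : ℂ) * (∏ i, p i ^ s i) * ∏ i, (ω ^ s i * ω⁻¹ ^ μ i) ^ (θ i).val =
      if s = μ then (Q : ℂ) ^ L * ((coeff μ f : ℕ) : ℂ) * ∏ i, p i ^ μ i else 0 := by
    intro s hs
    rw [← Finset.mul_sum]
    have h3 : ∑ θ : Fin L → Fin Q, ∏ i, (ω ^ s i * ω⁻¹ ^ μ i) ^ (θ i).val = ∏ i, ∑ t : Fin Q, (ω ^ s i * ω⁻¹ ^ μ i) ^ t.val := by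
      rw [Finset.prod_univ_sum, Fintype.piFinset_univ]
    rw [h3]
    split_ifs with h
    · subst h
      have : ∀ i, ω ^ s i * ω⁻¹ ^ s i = 1 := by
        intro i
        rw [← mul_pow, mul_inv_cancel₀ hω0, one_pow]
      simp only [this, one_pow]
      simp
      ring
    · obtain ⟨i, hi⟩ : ∃ i, s i ≠ μ i := by
        by_contra hcon
        push Not at hcon
        exact h (Finsupp.ext hcon)
      rw [Finset.prod_eq_zero (f := fun i => ∑ t : Fin Q, (ω ^ s i * ω⁻¹ ^ μ i) ^ t.val) (Finset.mem_univ i), mul_zero]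
      apply sum_root_pow
      · rw [mul_pow, pow_right_comm, hω.pow_eq_one, pow_right_comm, inv_pow, hω.pow_eq_one]; simp
      · intro h4
        rw [inv_pow, mul_inv_eq_one₀ (pow_ne_zero _ hω0)] at h4
        exact hi (hω.pow_inj (hf s hs i) (hμ i) h4)
  rw [Finset.sum_congr rfl h2, Finset.sum_ite_eq']
  split_ifs with h
  · rfl
  · rw [notMem_support_iff.mp h]; simp

theorem fourier_bound (L Q n : ℕ) (hQ : n < Q) (f g : MvPolynomial (Fin L) ℕ) (hf : f.totalDegree ≤ n) (hg : g.totalDegree ≤ n)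
    (μ : Fin L →₀ ℕ) (hμ : ∀ i, μ i ≤ n) (p : Fin L → ℝ) :
    ((Q : ℝ) ^ L * ∏ i, p i ^ μ i) * (((coeff μ f : ℕ) : ℝ) - ((coeff μ g : ℕ) : ℝ)) ≤
      ∑ θ : Fin L → Fin Q, ‖aeval (fun i => (p i : ℂ) * Complex.exp (((2 * Real.pi * (θ i).val / Q : ℝ) : ℂ) * Complex.I)) f -
        aeval (fun i => (p i : ℂ) * Complex.exp (((2 * Real.pi * (θ i).val / Q : ℝ) : ℂ) * Complex.I)) g‖ := by
  have hQ0 : 0 < Q := by omega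
  set ω := Complex.exp (2 * Real.pi * Complex.I / Q) with hωd
  have hω : IsPrimitiveRoot ω Q := Complex.isPrimitiveRoot_exp Q hQ0.ne'
  have hy : ∀ θ : Fin L → Fin Q, (fun i => (p i : ℂ) * Complex.exp (((2 * Real.pi * (θ i).val / Q : ℝ) : ℂ) * Complex.I)) =
      fun i => (p i : ℂ) * ω ^ (θ i).val := by
    intro θ
    funext i
    rw [hωd, ← Complex.exp_nat_mul]
    congr 2
    push_cast
    ring
  have hsup : ∀ f : MvPolynomial (Fin L) ℕ, f.totalDegree ≤ n → ∀ s ∈ f.support, ∀ i, s i < Q := by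
    intro f hf s hs i
    have h1 := le_totalDegree hs
    have h2 : s i ≤ s.sum fun _ e => e := by
      rw [Finsupp.sum_fintype _ _ (fun _ => rfl)]
      exact Finset.single_le_sum (f := fun i => s i) (fun _ _ => Nat.zero_le _) (Finset.mem_univ i)
    omega
  have e1 := fourier_coeff L Q hQ0 ω hω f μ (fun i => by have := hμ i; omega) (hsup f hf) (fun i => (p i : ℂ))
  have e2 := fourier_coeff L Q hQ0 ω hω g μ (fun i => by have := hμ i; omega) (hsup g hg) (fun i => (p i : ℂ))
  have e3 : ((((Q : ℝ) ^ L * ∏ i, p i ^ μ i) * (((coeff μ f : ℕ) : ℝ) - ((coeff μ g : ℕ) : ℝ)) : ℝ) : ℂ) =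
      ∑ θ : Fin L → Fin Q, (∏ i, (ω⁻¹ ^ μ i) ^ (θ i).val) * (aeval (fun i => (p i : ℂ) * ω ^ (θ i).val) f - aeval (fun i => (p i : ℂ) * ω ^ (θ i).val) g) := by
    simp only [mul_sub, Finset.sum_sub_distrib]
    rw [e1, e2]
    push_cast
    ring
  refine (le_abs_self _).trans ?_
  rw [← Real.norm_eq_abs, ← Complex.norm_real, e3]
  refine (norm_sum_le _ _).trans ?_
  refine Finset.sum_le_sum fun θ _ => ?_
  rw [hy θ, norm_mul]
  have hn : ‖ω‖ = 1 := hω.norm'_eq_one hQ0.ne'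
  have : ‖∏ i, (ω⁻¹ ^ μ i) ^ (θ i).val‖ = 1 := by
    rw [norm_prod]
    simp [hn]
  rw [this, one_mul]
end FourierD


/-- geometric reference frequencies (zero based) -/
noncomputable def gg (i : ℕ) : ℝ := if i = 0 then 0 else (1/2 : ℝ) ^ i

theorem gg_nonneg (i : ℕ) : 0 ≤ gg i := by unfold gg; split_ifs <;> positivity

theorem poly_exp_bound (d : ℕ) {R R1 : ℝ} (hR : 0 ≤ R) (h : R < R1) : ∃ K : ℝ, 0 < K ∧ ∀ j : ℕ, (j : ℝ) ^ d * R ^ j ≤ K * R1 ^ j := by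
  have hR1 : 0 < R1 := lt_of_le_of_lt hR h
  have ht := tendsto_pow_const_mul_const_pow_of_lt_one d (div_nonneg hR hR1.le) ((div_lt_one hR1).2 h)
  obtain ⟨K, hK⟩ := ht.bddAbove_range
  refine ⟨max K 1, by positivity, fun j => ?_⟩
  have := hK ⟨j, rfl⟩
  simp only at this
  rw [div_pow, ← mul_div_assoc, div_le_iff₀ (by positivity)] at this
  exact this.trans (mul_le_mul_of_nonneg_right (le_max_left _ _) (by positivity))

theorem small_exp_bound {R R1 : ℝ} (hR : 0 ≤ R) (h : R < R1) (κ : ℝ) (hκ : 0 < κ) : ∃ B : ℝ, 0 < B ∧ ∀ j : ℕ, (j : ℝ) * R ^ j ≤ B + κ * R1 ^ j := by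
  have hR1 : 0 < R1 := lt_of_le_of_lt hR h
  have ht := tendsto_pow_const_mul_const_pow_of_lt_one 1 (div_nonneg hR hR1.le) ((div_lt_one hR1).2 h)
  obtain ⟨N, hN⟩ := Filter.eventually_atTop.1 (ht.eventually (ge_mem_nhds hκ))
  refine ⟨∑ j ∈ range N, (j : ℝ) * R ^ j + 1, by positivity, fun j => ?_⟩
  by_cases hj : j < N
  · have := Finset.single_le_sum (f := fun j : ℕ => (j : ℝ) * R ^ j) (fun _ _ => by positivity) (Finset.mem_range.2 hj)
    have h2 : 0 ≤ κ * R1 ^ j := by positivity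
    linarith
  · have := hN j (not_lt.1 hj)
    rw [pow_one, div_pow, ← mul_div_assoc, div_le_iff₀ (by positivity)] at this
    have h2 : 0 ≤ ∑ j ∈ range N, (j : ℝ) * R ^ j := Finset.sum_nonneg fun _ _ => by positivity
    linarith

theorem pow_sub_one_le (r : ℝ) (hr : 1 ≤ r) (l : ℕ) : r ^ l - 1 ≤ l * (r - 1) * r ^ l := by
  induction l with
  | zero => simp
  | succ l ih =>
    have h1 : (1 : ℝ) ≤ r ^ (l+1) := one_le_pow₀ hr
    rw [pow_succ] at h1 ⊢
    push_cast
    nlinarith [mul_le_mul_of_nonneg_left ih (by linarith : (0:ℝ) ≤ r), mul_le_mul_of_nonneg_left h1 (by linarith : (0:ℝ) ≤ r - 1)]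

theorem pow_sub_one_le_log (r : ℝ) (hr : 1 ≤ r) (l : ℕ) : r ^ l - 1 ≤ Real.log r * (l * r ^ l) := by
  have h0 : 0 < r := by linarith
  have h1 := Real.add_one_le_exp (-(Real.log r * l))
  rw [Real.exp_neg, mul_comm (Real.log r), Real.exp_nat_mul, Real.exp_log h0] at h1
  have h2 : 0 < r ^ l := by positivity
  have h3 := mul_le_mul_of_nonneg_right h1 h2.le
  rw [inv_mul_cancel₀ h2.ne'] at h3
  nlinarith

section RootE
variable {L : ℕ} (p : ℕ → ℝ)

noncomputable def GG (i : ℕ) (z : ℂ) : ℂ := ∑ a ∈ range (i+1), z ^ a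

theorem GG_succ (i : ℕ) (z : ℂ) : GG (i+1) z = 1 + z * GG i z := by
  unfold GG
  rw [Finset.sum_range_succ', Finset.mul_sum]
  simp [pow_succ', add_comm]

theorem GG_norm (i : ℕ) (z : ℂ) (R : ℝ) (hR : 1 ≤ R) (hz : ‖z‖ ≤ R) : ‖GG i z‖ ≤ ((i+1 : ℕ) : ℝ) * R ^ (i+1) := by
  unfold GG
  refine (norm_sum_le _ _).trans ?_
  refine (Finset.sum_le_card_nsmul _ _ (R ^ (i+1)) ?_).trans ?_
  · intro a ha
    rw [norm_pow]
    exact (pow_le_pow_left₀ (norm_nonneg _) hz a).trans (pow_le_pow_right₀ hR (Finset.mem_range.1 ha).le)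
  · simp

def sh (e : ℕ → ℝ) (i : ℕ) : ℝ := 2 * e i - (if i = 0 then 0 else e (i - 1))

theorem two_sub_mul (hL : p L = 0) (hsum : ∑ i ∈ range L, p i = 1) (z : ℂ) :
    (2 - z) * ∑ i ∈ range L, (p i : ℂ) * GG i z = 1 + ∑ i ∈ range (L+1), (sh p i : ℂ) * GG i z := by
  have h1 : ∑ i ∈ range (L+1), (sh p i : ℂ) * GG i z = ∑ i ∈ range L, 2 * (p i : ℂ) * GG i z - ∑ i ∈ range L, (p i : ℂ) * GG (i+1) z := by
    have : ∀ i, (sh p i : ℂ) * GG i z = 2 * (p i : ℂ) * GG i z - (if i = 0 then 0 else (p (i-1) : ℂ)) * GG i z := by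
      intro i
      unfold sh
      split_ifs <;> push_cast <;> ring
    simp only [this]
    rw [Finset.sum_sub_distrib]
    congr 1
    · rw [Finset.sum_range_succ, hL]; simp
    · rw [Finset.sum_range_succ']; simp
  rw [h1]
  have h2 : (1 : ℂ) = ∑ i ∈ range L, (p i : ℂ) := by rw [← Complex.ofReal_sum, hsum]; simp
  rw [h2, Finset.mul_sum, ← Finset.sum_sub_distrib, ← Finset.sum_add_distrib]
  refine Finset.sum_congr rfl fun i _ => ?_
  rw [GG_succ]
  ring

theorem D_lower {K R R1 τ : ℝ} (hR : 1 ≤ R) (hR2 : R < 2) (hR1 : 0 < R1) (hR12 : R1 < 2) (hK0 : 0 < K) (hK : ∀ j : ℕ, (j : ℝ) * R ^ j ≤ K * R1 ^ j)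
    (hL1 : 1 ≤ L) (hL : p L = 0) (hsum : ∑ i ∈ range L, p i = 1)
    (hτ : ∑ i ∈ range (L+1), |p i - gg i| * R1 ^ (i+1) ≤ τ) (z : ℂ) (hz : ‖z‖ ≤ R) :
    2 - R - 4 * K * τ ≤ 4 * ‖∑ i ∈ range L, (p i : ℂ) * GG i z‖ := by
  have h1 := two_sub_mul (L := L) p hL hsum z
  have hg : ∑ i ∈ range (L+1), (sh gg i : ℂ) * GG i z = 1 + z := by
    rw [Finset.sum_eq_single 1]
    · simp [sh, gg, GG, Finset.sum_range_succ]
    · intro i _ hi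
      have : sh gg i = 0 := by
        unfold sh gg
        rcases i with _ | _ | i
        · simp
        · omega
        · simp only [Nat.add_eq_zero_iff, one_ne_zero, and_false, if_false, Nat.add_sub_cancel, pow_succ]; ring
      rw [this]; simp
    · intro h; exact absurd (Finset.mem_range.2 (by omega)) h
  have h2 : (2 - z) * ∑ i ∈ range L, (p i : ℂ) * GG i z = (2 + z) + ∑ i ∈ range (L+1), (sh (fun i => p i - gg i) i : ℂ) * GG i z := by
    rw [h1]
    have : ∀ i, (sh (fun i => p i - gg i) i : ℂ) * GG i z = (sh p i : ℂ) * GG i z - (sh gg i : ℂ) * GG i z := by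
      intro i; unfold sh; split_ifs <;> push_cast <;> ring
    simp only [this]
    rw [Finset.sum_sub_distrib, hg]
    ring
  set d : ℕ → ℝ := fun i => p i - gg i with hd
  have h3 : ‖∑ i ∈ range (L+1), (sh d i : ℂ) * GG i z‖ ≤ 4 * K * τ := by
    refine (norm_sum_le _ _).trans ?_
    have hb : ∀ i, ‖(sh d i : ℂ) * GG i z‖ ≤ 2 * |d i| * (K * R1 ^ (i+1)) + (if i = 0 then 0 else |d (i-1)|) * (K * R1 ^ (i+1)) := by
      intro i
      rw [norm_mul, Complex.norm_real, Real.norm_eq_abs, ← add_mul]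
      refine mul_le_mul ?_ ((GG_norm i z R hR hz).trans (hK (i+1))) (norm_nonneg _) ?_
      · unfold sh
        refine (abs_sub _ _).trans ?_
        rw [abs_mul, abs_two]
        split_ifs <;> simp
      · split_ifs <;> positivity
    refine (Finset.sum_le_sum fun i _ => hb i).trans ?_
    rw [Finset.sum_add_distrib]
    have e1 : ∑ i ∈ range (L+1), 2 * |d i| * (K * R1 ^ (i+1)) ≤ 2 * K * τ := by
      have : ∑ i ∈ range (L+1), 2 * |d i| * (K * R1 ^ (i+1)) = 2 * K * ∑ i ∈ range (L+1), |d i| * R1 ^ (i+1) := by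
        rw [Finset.mul_sum]; exact Finset.sum_congr rfl fun i _ => by ring
      rw [this]
      exact mul_le_mul_of_nonneg_left hτ (by positivity)
    have e2 : ∑ i ∈ range (L+1), (if i = 0 then 0 else |d (i-1)|) * (K * R1 ^ (i+1)) ≤ 2 * K * τ := by
      rw [Finset.sum_range_succ']
      simp only [Nat.add_eq_zero_iff, one_ne_zero, and_false, if_false, Nat.add_sub_cancel, if_true, zero_mul, add_zero]
      have : ∑ i ∈ range L, |d i| * (K * R1 ^ (i+1+1)) ≤ 2 * K * ∑ i ∈ range (L+1), |d i| * R1 ^ (i+1) := by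
        rw [Finset.mul_sum, Finset.sum_range_succ]
        have h5 : 0 ≤ 2 * K * (|d L| * R1 ^ (L+1)) := by positivity
        refine le_trans (Finset.sum_le_sum fun i _ => ?_) (le_add_of_nonneg_right h5)
        rw [pow_succ R1 (i+1)]
        have : 0 ≤ |d i| * K * R1 ^ (i+1) := by positivity
        nlinarith
      exact this.trans (mul_le_mul_of_nonneg_left hτ (by positivity))
    linarith
  have h4 : 2 - R ≤ ‖2 + z‖ := by
    have := norm_sub_norm_le (2 : ℂ) (-z)
    rw [norm_neg, sub_neg_eq_add] at this
    have h2 : ‖(2:ℂ)‖ = 2 := by simp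
    linarith
  have h5 : ‖2 - z‖ ≤ 4 := by
    have := norm_sub_le (2 : ℂ) z
    have h2 : ‖(2:ℂ)‖ = 2 := by simp
    linarith
  have h6 : ‖(2 + z) + ∑ i ∈ range (L+1), (sh d i : ℂ) * GG i z‖ ≥ ‖2 + z‖ - ‖∑ i ∈ range (L+1), (sh d i : ℂ) * GG i z‖ := by
    have := norm_sub_norm_le (2 + z) (-∑ i ∈ range (L+1), (sh d i : ℂ) * GG i z)
    rw [norm_neg, sub_neg_eq_add] at this
    exact this
  rw [← h2, norm_mul] at h6
  have h7 := mul_le_mul_of_nonneg_right h5 (norm_nonneg (∑ i ∈ range L, (p i : ℂ) * GG i z))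
  linarith
end RootE


theorem gg_sum {R1 : ℝ} (h0 : 0 ≤ R1) (h2 : R1 < 2) (N : ℕ) : ∑ i ∈ range N, gg i * R1 ^ (i+1) ≤ 2 * R1 / (2 - R1) := by
  have h1 : ∑ i ∈ range N, gg i * R1 ^ (i+1) ≤ ∑ i ∈ range N, R1 * (R1/2) ^ i := by
    refine Finset.sum_le_sum fun i _ => ?_
    have : gg i ≤ (1/2:ℝ)^i := by
      by_cases h : i = 0
      · rw [gg, if_pos h]; positivity
      · rw [gg, if_neg h]
    calc gg i * R1 ^ (i+1) ≤ (1/2:ℝ)^i * R1 ^ (i+1) := mul_le_mul_of_nonneg_right this (by positivity)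
      _ = R1 * (R1/2) ^ i := by rw [pow_succ, div_pow, div_pow]; ring
  refine h1.trans ?_
  rw [← Finset.mul_sum, le_div_iff₀ (by linarith)]
  have h3 := mul_neg_geom_sum (R1/2) N
  have h4 : 0 ≤ (R1/2)^N := by positivity
  nlinarith

theorem sum_p_R1 {R1 τ : ℝ} (h0 : 0 ≤ R1) (h2 : R1 < 2) {L : ℕ} {p : ℕ → ℝ}
    (hτ : ∑ i ∈ range (L+1), |p i - gg i| * R1 ^ (i+1) ≤ τ) : ∑ i ∈ range L, p i * R1 ^ (i+1) ≤ τ + 2 * R1 / (2 - R1) := by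
  have h1 : ∑ i ∈ range L, p i * R1 ^ (i+1) ≤ ∑ i ∈ range L, (|p i - gg i| * R1 ^ (i+1) + gg i * R1 ^ (i+1)) := by
    refine Finset.sum_le_sum fun i _ => ?_
    rw [← add_mul]
    refine mul_le_mul_of_nonneg_right ?_ (by positivity)
    have := le_abs_self (p i - gg i)
    linarith
  refine h1.trans ?_
  rw [Finset.sum_add_distrib]
  refine add_le_add (le_trans ?_ hτ) (gg_sum h0 h2 L)
  exact Finset.sum_le_sum_of_subset_of_nonneg (Finset.range_subset_range.2 (by omega)) fun _ _ _ => by positivity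

theorem root_params {R R1 η0 : ℝ} (hR : 1 < R) (hRR : R < R1) (hR2 : R1 < 2) (hη : 0 < η0) :
    ∃ c τ0 : ℝ, 0 < c ∧ c < η0 ∧ 0 < τ0 ∧ ∀ (L : ℕ) (p : ℕ → ℝ), (∀ i, 0 ≤ p i) → (∀ i, L ≤ i → p i = 0) →
      ∑ i ∈ range L, p i = 1 → ∑ i ∈ range (L+1), |p i - gg i| * R1 ^ (i+1) ≤ τ0 →
      ∀ (u : ℕ → ℂ), (∀ i, ‖u i‖ = 1) → ∀ r : ℝ, 0 < r → r ≤ 1 + c →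
        ∑ i ∈ range L, (p i : ℂ) * u i * (r : ℂ) ^ (i+1) = 1 →
        (∀ z : ℂ, ‖z‖ ≤ R → ∑ i ∈ range L, (p i : ℂ) * u i * ∑ a ∈ range (i+1), (r : ℂ) ^ (i - a) * z ^ a ≠ 0) ∧
        0.9 * ∑ i ∈ range L, p i * (1 - (u i).re) ≤ Real.log r * ∑ i ∈ range L, ((i : ℝ)+1) * p i := by
  have hR0 : (0:ℝ) ≤ R := by linarith
  have hR10 : (0:ℝ) < R1 := by linarith
  obtain ⟨K, hK0, hK'⟩ := poly_exp_bound 1 hR0 hRR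
  have hK : ∀ j : ℕ, (j : ℝ) * R ^ j ≤ K * R1 ^ j := fun j => by simpa using hK' j
  set R2 := (R + R1) / 2 with hR2d
  have hRR2 : R < R2 := by rw [hR2d]; linarith
  have hR21 : R2 < R1 := by rw [hR2d]; linarith
  obtain ⟨K2, hK20, hK2⟩ := poly_exp_bound 2 (by linarith : (0:ℝ) ≤ R2) hR21
  set K1 : ℝ := 1 + 2 * R1 / (2 - R1) with hK1
  have hK10 : 0 < K1 := by
    have : 0 < 2 * R1 / (2 - R1) := div_pos (by linarith) (by linarith)
    linarith
  set σ := (2 - R) / 8 with hσ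
  have hσ0 : 0 < σ := by rw [hσ]; linarith
  set κ := σ / (8 * K1) with hκ
  have hκ0 : 0 < κ := by positivity
  obtain ⟨B, hB0, hB⟩ := small_exp_bound (by linarith : (0:ℝ) ≤ R2) hR21 κ hκ0
  set h := σ / (4 * B) with hh'
  have hh0 : 0 < h := by positivity
  set c1 := σ / (4 * ((2 * B / h + 1) * K2 * K1)) with hc1
  have hc10 : 0 < c1 := by positivity
  set c2 := 1 / (10 * (K2 * K1)) with hc2
  have hc20 : 0 < c2 := by positivity
  set c3 := R2 / R - 1 with hc3
  have hc30 : 0 < c3 := by rw [hc3, sub_pos, one_lt_div (by linarith)]; exact hRR2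
  refine ⟨min (η0/2) (min c1 (min c2 c3)), min 1 ((2 - R) / (8 * K)), by positivity, ?_, ?_, ?_⟩
  · exact lt_of_le_of_lt (min_le_left _ _) (by linarith)
  · have : 0 < (2 - R) / (8 * K) := div_pos (by linarith) (by positivity)
    positivity
  generalize hcd : min (η0/2) (min c1 (min c2 c3)) = c
  have hcc1 : c ≤ c1 := by rw [← hcd]; exact (min_le_right _ _).trans (min_le_left _ _)
  have hcc2 : c ≤ c2 := by rw [← hcd]; exact (min_le_right _ _).trans ((min_le_right _ _).trans (min_le_left _ _))
  have hcc3 : c ≤ c3 := by rw [← hcd]; exact (min_le_right _ _).trans ((min_le_right _ _).trans (min_le_right _ _))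
  have hc0 : 0 < c := by rw [← hcd]; positivity
  intro L p hp hpL hsum hτ u hu r hr hrc hone
  have hL1 : 1 ≤ L := by
    by_contra hcon
    have : L = 0 := by omega
    subst this
    simp at hsum
  have hpR1 : ∑ i ∈ range L, p i * R1 ^ (i+1) ≤ K1 := by
    have := sum_p_R1 (L := L) (p := p) hR10.le hR2 hτ
    have h2 := min_le_left 1 ((2 - R) / (8 * K))
    linarith
  have hr1 : 1 ≤ r := by
    by_contra hcon
    have hlt : r < 1 := not_le.1 hcon
    have h1 : ‖∑ i ∈ range L, (p i : ℂ) * u i * (r : ℂ) ^ (i+1)‖ ≤ ∑ i ∈ range L, p i * r := by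
      refine (norm_sum_le _ _).trans (Finset.sum_le_sum fun i _ => ?_)
      rw [norm_mul, norm_mul, hu, norm_pow, Complex.norm_real, Complex.norm_real, Real.norm_of_nonneg (hp i), Real.norm_of_nonneg hr.le, mul_one]
      refine mul_le_mul_of_nonneg_left ?_ (hp i)
      exact pow_le_of_le_one hr.le hlt.le (by omega)
    rw [hone, ← Finset.sum_mul, hsum, norm_one] at h1
    linarith
  have hrR : r * R ≤ R2 := by
    have : r ≤ R2 / R := by
      have : r ≤ 1 + c3 := by linarith
      rw [hc3] at this; linarith
    rwa [le_div_iff₀ (by linarith)] at this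
  have hre1 : ∀ i, (u i).re ≤ 1 := fun i => (Complex.re_le_norm _).trans (hu i).le
  have hre : ∑ i ∈ range L, p i * r ^ (i+1) * (u i).re = 1 := by
    have := congrArg Complex.re hone
    rw [Complex.re_sum, Complex.one_re] at this
    rw [← this]
    refine Finset.sum_congr rfl fun i _ => ?_
    rw [← Complex.ofReal_pow, mul_assoc (p i : ℂ), Complex.re_ofReal_mul, mul_comm (u i), Complex.re_ofReal_mul]
    ring
  set A := ∑ i ∈ range L, p i * (1 - (u i).re) with hA
  set Y := ∑ i ∈ range L, p i * (((i+1:ℕ):ℝ) * (r ^ (i+1) - 1) * R ^ (i+1)) with hY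
  have hrp : ∀ i : ℕ, 1 ≤ r ^ i := fun i => one_le_pow₀ hr1
  have hRp : ∀ i : ℕ, 1 ≤ R ^ i := fun i => one_le_pow₀ hR.le
  have hAΔ : A ≤ ∑ i ∈ range L, p i * (r ^ (i+1) - 1) := by
    have : ∑ i ∈ range L, p i * (r ^ (i+1) - 1) = ∑ i ∈ range L, p i * r ^ (i+1) * (1 - (u i).re) := by
      have e1 : ∑ i ∈ range L, p i * (r ^ (i+1) - 1) = ∑ i ∈ range L, p i * r ^ (i+1) - ∑ i ∈ range L, p i := by
        rw [← Finset.sum_sub_distrib]; exact Finset.sum_congr rfl fun i _ => by ring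
      have e2 : ∑ i ∈ range L, p i * r ^ (i+1) * (1 - (u i).re) = ∑ i ∈ range L, p i * r ^ (i+1) - ∑ i ∈ range L, p i * r ^ (i+1) * (u i).re := by
        rw [← Finset.sum_sub_distrib]; exact Finset.sum_congr rfl fun i _ => by ring
      rw [e1, e2, hsum, hre]
    rw [this]
    refine Finset.sum_le_sum fun i _ => ?_
    refine mul_le_mul_of_nonneg_right ?_ (by linarith [hre1 i])
    exact le_mul_of_one_le_right (hp i) (hrp _)
  have hY1 : Y ≤ c * (K2 * K1) := by
    have : Y ≤ ∑ i ∈ range L, c * K2 * (p i * R1 ^ (i+1)) := by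
      refine Finset.sum_le_sum fun i _ => ?_
      have e1 := pow_sub_one_le r hr1 (i+1)
      have e2 := hK2 (i+1)
      have e3 : r ^ (i+1) * R ^ (i+1) ≤ R2 ^ (i+1) := by
        rw [← mul_pow]; exact pow_le_pow_left₀ (by positivity) hrR _
      have hl : (0:ℝ) ≤ ((i+1:ℕ):ℝ) := by positivity
      have hRi : 0 ≤ R ^ (i+1) := by positivity
      have : ((i+1:ℕ):ℝ) * (r ^ (i+1) - 1) * R ^ (i+1) ≤ c * (K2 * R1 ^ (i+1)) := by
        calc ((i+1:ℕ):ℝ) * (r ^ (i+1) - 1) * R ^ (i+1) ≤ ((i+1:ℕ):ℝ) * (((i+1:ℕ):ℝ) * c * r ^ (i+1)) * R ^ (i+1) := by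
              gcongr
              refine e1.trans ?_
              gcongr
              linarith
          _ = c * (((i+1:ℕ):ℝ) ^ 2 * (r ^ (i+1) * R ^ (i+1))) := by ring
          _ ≤ c * (((i+1:ℕ):ℝ) ^ 2 * R2 ^ (i+1)) := by gcongr
          _ ≤ _ := by gcongr
      calc p i * (((i+1:ℕ):ℝ) * (r ^ (i+1) - 1) * R ^ (i+1)) ≤ p i * (c * (K2 * R1 ^ (i+1))) := mul_le_mul_of_nonneg_left this (hp i)
        _ = _ := by ring
    refine this.trans ?_
    rw [← Finset.mul_sum, ← mul_assoc]
    exact mul_le_mul_of_nonneg_left hpR1 (by positivity)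
  have hY10 : Y ≤ 1/10 := by
    refine hY1.trans ?_
    calc c * (K2 * K1) ≤ c2 * (K2 * K1) := by gcongr
      _ = 1/10 := by rw [hc2]; field_simp
  have hΔY : ∑ i ∈ range L, p i * (r ^ (i+1) - 1) ≤ Y := by
    refine Finset.sum_le_sum fun i _ => mul_le_mul_of_nonneg_left ?_ (hp i)
    have h1 : (0:ℝ) ≤ r ^ (i+1) - 1 := by linarith [hrp (i+1)]
    have h2 : (1:ℝ) ≤ ((i+1:ℕ):ℝ) := by push_cast; linarith [(Nat.cast_nonneg i : (0:ℝ) ≤ i)]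
    calc r ^ (i+1) - 1 ≤ ((i+1:ℕ):ℝ) * (r ^ (i+1) - 1) := le_mul_of_one_le_left h1 h2
      _ ≤ _ := le_mul_of_one_le_right (by positivity) (hRp _)
  have hlog : 0 ≤ Real.log r := Real.log_nonneg hr1
  have hA0 : 0 ≤ A := Finset.sum_nonneg fun i _ => mul_nonneg (hp i) (by linarith [hre1 i])
  refine ⟨?_, ?_⟩
  · intro z hz hD
    have hlow := D_lower (L := L) p hR.le (by linarith) hR10 hR2 hK0 hK hL1 (hpL L le_rfl) hsum (hτ.trans (min_le_right _ _)) z hz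
    have hKτ : 4 * K * ((2 - R) / (8 * K)) = (2 - R) / 2 := by field_simp; ring
    rw [hKτ] at hlow
    have hdiff : ‖∑ i ∈ range L, (p i : ℂ) * GG i z - ∑ i ∈ range L, (p i : ℂ) * u i * ∑ a ∈ range (i+1), (r : ℂ) ^ (i - a) * z ^ a‖ ≤
        ∑ i ∈ range L, p i * (((i+1:ℕ):ℝ) * R2 ^ (i+1) * ‖u i - 1‖ + ((i+1:ℕ):ℝ) * (r ^ (i+1) - 1) * R ^ (i+1)) := by
      rw [← Finset.sum_sub_distrib]
      refine (norm_sum_le _ _).trans (Finset.sum_le_sum fun i _ => ?_)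
      have e0 : (p i : ℂ) * GG i z - (p i : ℂ) * u i * ∑ a ∈ range (i+1), (r : ℂ) ^ (i - a) * z ^ a =
          (p i : ℂ) * ∑ a ∈ range (i+1), (1 - u i * (r : ℂ) ^ (i - a)) * z ^ a := by
        rw [mul_assoc, ← mul_sub, GG, Finset.mul_sum (a := u i), ← Finset.sum_sub_distrib]
        congr 1
        exact Finset.sum_congr rfl fun a _ => by ring
      rw [e0, norm_mul, Complex.norm_real, Real.norm_of_nonneg (hp i)]
      refine mul_le_mul_of_nonneg_left ?_ (hp i)
      refine (norm_sum_le _ _).trans ?_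
      refine (Finset.sum_le_card_nsmul _ _ ((‖u i - 1‖ * r ^ (i+1) + (r ^ (i+1) - 1)) * R ^ (i+1)) ?_).trans ?_
      · intro a ha
        have hb : r ^ (i - a) ≤ r ^ (i+1) := pow_le_pow_right₀ hr1 (by omega)
        rw [norm_mul, norm_pow]
        refine mul_le_mul ?_ ((pow_le_pow_left₀ (norm_nonneg _) hz a).trans (pow_le_pow_right₀ hR.le (Finset.mem_range.1 ha).le)) (by positivity) ?_
        · have : 1 - u i * (r : ℂ) ^ (i - a) = -((u i - 1) * (r : ℂ) ^ (i - a)) - (((r ^ (i - a) - 1 : ℝ)) : ℂ) := by push_cast; ring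
          rw [this]
          refine (norm_sub_le _ _).trans ?_
          rw [norm_neg, norm_mul, norm_pow, Complex.norm_real, Complex.norm_real, Real.norm_of_nonneg hr.le, Real.norm_of_nonneg (by linarith [hrp (i-a)])]
          gcongr
        · have := hrp (i+1)
          have h2 : 0 ≤ ‖u i - 1‖ * r ^ (i+1) := by positivity
          linarith
      · rw [Finset.card_range, nsmul_eq_mul]
        have e3 : r ^ (i+1) * R ^ (i+1) ≤ R2 ^ (i+1) := by
          rw [← mul_pow]; exact pow_le_pow_left₀ (by positivity) hrR _
        have e4 : ((i+1:ℕ):ℝ) * (r ^ (i+1) * R ^ (i+1)) * ‖u i - 1‖ ≤ ((i+1:ℕ):ℝ) * R2 ^ (i+1) * ‖u i - 1‖ := by gcongr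
        linarith
    rw [hD, sub_zero] at hdiff
    have ht : ∀ i, ‖u i - 1‖ ^ 2 = 2 * (1 - (u i).re) := by
      intro i
      rw [← Complex.normSq_eq_norm_sq, Complex.normSq_sub, Complex.normSq_eq_norm_sq, hu]
      simp
      ring
    have ht2 : ∀ i, ‖u i - 1‖ ≤ 2 := by
      intro i
      have := norm_sub_le (u i) 1
      rw [hu, norm_one] at this
      linarith
    have hbound : ∑ i ∈ range L, p i * (((i+1:ℕ):ℝ) * R2 ^ (i+1) * ‖u i - 1‖ + ((i+1:ℕ):ℝ) * (r ^ (i+1) - 1) * R ^ (i+1)) ≤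
        ∑ i ∈ range L, (2 * B / h * (p i * (1 - (u i).re)) + B * h * p i + 2 * κ * (p i * R1 ^ (i+1)) + p i * (((i+1:ℕ):ℝ) * (r ^ (i+1) - 1) * R ^ (i+1))) := by
      refine Finset.sum_le_sum fun i _ => ?_
      have e1 : ((i+1:ℕ):ℝ) * R2 ^ (i+1) * ‖u i - 1‖ ≤ B * (2 * (1 - (u i).re) / h + h) + 2 * κ * R1 ^ (i+1) := by
        have e2 := mul_le_mul_of_nonneg_right (hB (i+1)) (norm_nonneg (u i - 1))
        have e3 : ‖u i - 1‖ ≤ 2 * (1 - (u i).re) / h + h := by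
          rw [← ht i]
          by_cases hcase : ‖u i - 1‖ ≤ h
          · have : 0 ≤ ‖u i - 1‖ ^ 2 / h := by positivity
            linarith
          · have : ‖u i - 1‖ ≤ ‖u i - 1‖ ^ 2 / h := by
              rw [le_div_iff₀ hh0, pow_two]
              exact mul_le_mul_of_nonneg_left (not_le.1 hcase).le (norm_nonneg _)
            linarith
        have e4 := mul_le_mul_of_nonneg_left e3 hB0.le
        have e5 := mul_le_mul_of_nonneg_left (ht2 i) (by positivity : 0 ≤ κ * R1 ^ (i+1))
        linarith
      have e6 := mul_le_mul_of_nonneg_left e1 (hp i)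
      have e7 : p i * (B * (2 * (1 - (u i).re) / h + h) + 2 * κ * R1 ^ (i+1)) = 2 * B / h * (p i * (1 - (u i).re)) + B * h * p i + 2 * κ * (p i * R1 ^ (i+1)) := by
        field_simp
      linarith
    rw [Finset.sum_add_distrib, Finset.sum_add_distrib, Finset.sum_add_distrib, ← Finset.mul_sum, ← Finset.mul_sum, ← Finset.mul_sum, hsum, mul_one] at hbound
    have f1 : B * h = σ / 4 := by rw [hh']; field_simp
    have f2 : 2 * κ * ∑ i ∈ range L, p i * R1 ^ (i+1) ≤ σ / 4 := by
      have : 2 * κ * K1 = σ / 4 := by rw [hκ]; field_simp; ring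
      rw [← this]
      exact mul_le_mul_of_nonneg_left hpR1 (by positivity)
    have f3 : 2 * B / h * A + Y ≤ σ / 4 := by
      have g1 : A ≤ c1 * (K2 * K1) := (hAΔ.trans (hΔY.trans hY1)).trans (by gcongr)
      have g2 : Y ≤ c1 * (K2 * K1) := hY1.trans (by gcongr)
      have g3 : (2 * B / h + 1) * (c1 * (K2 * K1)) = σ / 4 := by
        have : 0 < (2 * B / h + 1) * K2 * K1 := by positivity
        rw [hc1]
        field_simp
      have g4 := mul_le_mul_of_nonneg_left g1 (by positivity : 0 ≤ 2 * B / h)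
      linarith
    have f4 : σ * 8 = 2 - R := by rw [hσ]; ring
    linarith
  · have h1 : ∑ i ∈ range L, p i * (r ^ (i+1) - 1) ≤ Real.log r * (∑ i ∈ range L, ((i:ℝ)+1) * p i + Y) := by
      rw [hY, ← Finset.sum_add_distrib, Finset.mul_sum]
      refine Finset.sum_le_sum fun i _ => ?_
      have e1 := pow_sub_one_le_log r hr1 (i+1)
      have e2 : ((i+1:ℕ):ℝ) * (r ^ (i+1) - 1) ≤ ((i+1:ℕ):ℝ) * (r ^ (i+1) - 1) * R ^ (i+1) := by
        refine le_mul_of_one_le_right ?_ (hRp _)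
        have : (0:ℝ) ≤ r ^ (i+1) - 1 := by linarith [hrp (i+1)]
        positivity
      have e3 : ((i+1:ℕ):ℝ) * r ^ (i+1) ≤ ((i:ℝ)+1) + ((i+1:ℕ):ℝ) * (r ^ (i+1) - 1) * R ^ (i+1) := by
        push_cast at e2 ⊢; linarith
      calc p i * (r ^ (i+1) - 1) ≤ p i * (Real.log r * (((i+1:ℕ):ℝ) * r ^ (i+1))) := mul_le_mul_of_nonneg_left e1 (hp i)
        _ ≤ p i * (Real.log r * (((i:ℝ)+1) + ((i+1:ℕ):ℝ) * (r ^ (i+1) - 1) * R ^ (i+1))) :=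
            mul_le_mul_of_nonneg_left (mul_le_mul_of_nonneg_left e3 hlog) (hp i)
        _ = _ := by ring
    have h2 : 1 ≤ ∑ i ∈ range L, ((i:ℝ)+1) * p i := by
      rw [← hsum]
      refine Finset.sum_le_sum fun i _ => le_mul_of_one_le_left (hp i) ?_
      linarith [(Nat.cast_nonneg i : (0:ℝ) ≤ i)]
    have h3 : Real.log r * (∑ i ∈ range L, ((i:ℝ)+1) * p i + Y) ≤ Real.log r * (1.1 * ∑ i ∈ range L, ((i:ℝ)+1) * p i) :=
      mul_le_mul_of_nonneg_left (by linarith) hlog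
    have h4 : A ≤ 1.1 * (Real.log r * ∑ i ∈ range L, ((i:ℝ)+1) * p i) := by linarith
    have h5 : 0 ≤ Real.log r * ∑ i ∈ range L, ((i:ℝ)+1) * p i := mul_nonneg hlog (by linarith)
    linarith


theorem root_lemma {R R1 η0 : ℝ} (hR : 1 < R) (hRR : R < R1) (hR2 : R1 < 2) (hη : 0 < η0) :
    ∃ c τ0 : ℝ, 0 < c ∧ c < η0 ∧ 0 < τ0 ∧ ∀ (L : ℕ) (p : ℕ → ℝ), (∀ i, 0 ≤ p i) → (∀ i, L ≤ i → p i = 0) →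
      ∑ i ∈ range L, p i = 1 → ∑ i ∈ range (L+1), |p i - gg i| * R1 ^ (i+1) ≤ τ0 →
      ∀ (ψ : Fin L → ℝ) (Λ : Multiset ℂ),
        (∀ z : ℂ, (Λ.map fun l => 1 - l * z).prod = 1 - ∑ i : Fin L, ((p i.val : ℂ) * Complex.exp ((ψ i : ℂ) * Complex.I)) * z ^ (i.val + 1)) →
        (∀ l ∈ Λ, ‖l‖ ≤ 1 / (1 + c)) ∨ ∃ l1 ∈ Λ, ∃ φ : ℝ, 1 / (1 + c) ≤ ‖l1‖ ∧ (∀ l ∈ Λ.erase l1, ‖l‖ ≤ 1 / R) ∧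
          Real.log ‖l1‖ * ∑ i ∈ range L, ((i : ℝ)+1) * p i ≤
            -(0.9 * ∑ i : Fin L, p i.val * (1 - Real.cos (ψ i - ((i.val : ℝ) + 1) * φ))) := by
  obtain ⟨c, τ0, hc, hcη, hτ0, H⟩ := root_params hR hRR hR2 hη
  refine ⟨c, τ0, hc, hcη, hτ0, ?_⟩
  intro L p hp hpL hsum hτ ψ Λ hΛ
  by_cases hall : ∀ l ∈ Λ, ‖l‖ ≤ 1 / (1 + c)
  · exact Or.inl hall
  right
  push Not at hall
  obtain ⟨l1, hl1, hbig⟩ := hall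
  have hl0 : 0 < ‖l1‖ := lt_trans (by positivity) hbig
  have hl10 : l1 ≠ 0 := norm_pos_iff.1 hl0
  set φ := Complex.arg l1 with hφ
  set v := Complex.exp (((-φ : ℝ) : ℂ) * Complex.I) with hv
  have hvn : ‖v‖ = 1 := Complex.norm_exp_ofReal_mul_I _
  have hv0 : v ≠ 0 := Complex.exp_ne_zero _
  set r := ‖l1‖⁻¹ with hr
  have hr0 : 0 < r := by positivity
  have hz1 : l1⁻¹ = (r : ℂ) * v := by
    conv_lhs => rw [← Complex.norm_mul_exp_arg_mul_I l1]
    rw [mul_inv, ← Complex.exp_neg, hr, hv]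
    push_cast
    congr 2
    ring
  set u : ℕ → ℂ := fun i => if h : i < L then Complex.exp (((ψ ⟨i, h⟩ - ((i : ℝ) + 1) * φ : ℝ) : ℂ) * Complex.I) else 1 with hu
  have hun : ∀ i, ‖u i‖ = 1 := by
    intro i
    simp only [hu]
    split_ifs
    · exact Complex.norm_exp_ofReal_mul_I _
    · simp
  have hui : ∀ i : Fin L, u i.val = Complex.exp ((ψ i : ℂ) * Complex.I) * v ^ (i.val + 1) := by
    intro i
    simp only [hu, i.2, dif_pos]
    rw [hv, ← Complex.exp_nat_mul, ← Complex.exp_add]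
    congr 1
    push_cast
    ring
  have herase : Λ = l1 ::ₘ Λ.erase l1 := (Multiset.cons_erase hl1).symm
  have hz1root : ∑ i : Fin L, ((p i.val : ℂ) * Complex.exp ((ψ i : ℂ) * Complex.I)) * l1⁻¹ ^ (i.val + 1) = 1 := by
    have := hΛ l1⁻¹
    rw [herase, Multiset.map_cons, Multiset.prod_cons, mul_inv_cancel₀ hl10, sub_self, zero_mul] at this
    linear_combination this
  have hone : ∑ i ∈ range L, (p i : ℂ) * u i * (r : ℂ) ^ (i+1) = 1 := by
    rw [← hz1root, Finset.sum_range]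
    refine Finset.sum_congr rfl fun i _ => ?_
    rw [hui, hz1, mul_pow]
    ring
  have hrc : r ≤ 1 + c := by
    rw [hr, inv_le_comm₀ hl0 (by positivity), ← one_div]
    exact hbig.le
  obtain ⟨hD, hlog⟩ := H L p hp hpL hsum hτ u hun r hr0 hrc hone
  refine ⟨l1, hl1, φ, hbig.le, ?_, ?_⟩
  · intro l hl
    by_contra hcon
    rw [not_le] at hcon
    have hln : 0 < ‖l‖ := lt_trans (by positivity) hcon
    have hl0' : l ≠ 0 := norm_pos_iff.1 hln
    let DD : ℂ → ℂ := fun z => ∑ i : Fin L, ((p i.val : ℂ) * Complex.exp ((ψ i : ℂ) * Complex.I)) * ∑ a ∈ range (i.val + 1), l1⁻¹ ^ (i.val - a) * z ^ a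
    let PP : ℂ → ℂ := fun z => l1 * ((Λ.erase l1).map fun l => 1 - l * z).prod
    have hcD : Continuous DD := by fun_prop
    have hcP : Continuous PP := by
      refine continuous_const.mul ?_
      refine continuous_multiset_prod _ fun l _ => ?_
      fun_prop
    have hEq : DD = PP := by
      refine Continuous.ext_on (dense_compl_singleton l1⁻¹) hcD hcP ?_
      intro z hz
      have hz' : z ≠ l1⁻¹ := hz
      have h1 : (l1⁻¹ - z) * DD z = (l1⁻¹ - z) * PP z := by
        have e1 : (l1⁻¹ - z) * PP z = 1 - ∑ i : Fin L, ((p i.val : ℂ) * Complex.exp ((ψ i : ℂ) * Complex.I)) * z ^ (i.val + 1) := by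
          rw [← hΛ z]
          conv_rhs => rw [herase, Multiset.map_cons, Multiset.prod_cons]
          simp only [PP]
          rw [← mul_assoc, sub_mul, inv_mul_cancel₀ hl10, mul_comm z]
        rw [e1]
        have e2 : ∀ i : Fin L, (l1⁻¹ - z) * ∑ a ∈ range (i.val + 1), l1⁻¹ ^ (i.val - a) * z ^ a = l1⁻¹ ^ (i.val+1) - z ^ (i.val + 1) := by
          intro i
          have h := geom_sum₂_mul z l1⁻¹ (i.val + 1)
          simp only [Nat.add_sub_cancel] at h
          have h3 : ∑ a ∈ range (i.val + 1), l1⁻¹ ^ (i.val - a) * z ^ a = ∑ a ∈ range (i.val + 1), z ^ a * l1⁻¹ ^ (i.val - a) :=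
            Finset.sum_congr rfl fun a _ => mul_comm _ _
          rw [h3]
          linear_combination -h
        simp only [DD]
        rw [Finset.mul_sum]
        conv_rhs => rw [← hz1root]
        rw [← Finset.sum_sub_distrib]
        refine Finset.sum_congr rfl fun i _ => ?_
        rw [mul_left_comm, e2]
        ring
      exact mul_left_cancel₀ (sub_ne_zero.2 hz'.symm) h1
    have h0 : PP l⁻¹ = 0 := by
      simp only [PP]
      rw [Multiset.prod_eq_zero, mul_zero]
      rw [Multiset.mem_map]
      exact ⟨l, hl, by rw [mul_inv_cancel₀ hl0', sub_self]⟩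
    rw [← hEq] at h0
    have hz : ‖v⁻¹ * l⁻¹‖ ≤ R := by
      rw [norm_mul, norm_inv, norm_inv, hvn, inv_one, one_mul, inv_le_comm₀ hln (by linarith), ← one_div]
      exact hcon.le
    apply hD _ hz
    have h5 : ∑ i ∈ range L, (p i : ℂ) * u i * ∑ a ∈ range (i+1), (r : ℂ) ^ (i - a) * (v⁻¹ * l⁻¹) ^ a = v * DD l⁻¹ := by
      simp only [DD]
      rw [Finset.mul_sum, Finset.sum_range]
      refine Finset.sum_congr rfl fun i _ => ?_
      rw [hui, Finset.mul_sum, Finset.mul_sum, Finset.mul_sum]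
      refine Finset.sum_congr rfl fun a ha => ?_
      have ha' := Finset.mem_range.1 ha
      rw [hz1, mul_pow, mul_pow]
      have e3 : v ^ (i.val + 1) = v * v ^ (i.val - a) * v ^ a := by
        rw [← pow_succ', ← pow_add]; congr 1; omega
      have e4 : v ^ a * v⁻¹ ^ a = 1 := by rw [← mul_pow, mul_inv_cancel₀ hv0, one_pow]
      rw [e3]
      linear_combination ((p i.val : ℂ) * Complex.exp ((ψ i : ℂ) * Complex.I) * v * v ^ (i.val - a) * (r : ℂ) ^ (i.val - a) * l⁻¹ ^ a) * e4
    rw [h5, h0, mul_zero]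
  · have h1 : Real.log r = - Real.log ‖l1‖ := by rw [hr, Real.log_inv]
    rw [h1] at hlog
    have h2 : ∑ i ∈ range L, p i * (1 - (u i).re) = ∑ i : Fin L, p i.val * (1 - Real.cos (ψ i - ((i.val : ℝ) + 1) * φ)) := by
      rw [Finset.sum_range]
      refine Finset.sum_congr rfl fun i _ => ?_
      simp only [hu, i.2, dif_pos]
      rw [Complex.exp_ofReal_mul_I_re]
    rw [h2] at hlog
    linarith


theorem gauss_half (a : ℝ) (ha : 0 < a) (H : ℕ) : ∑ i ∈ range H, Real.exp (-a * (i:ℝ)^2) ≤ 1 + Real.sqrt (Real.pi / a) / 2 := by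
  rcases H with _ | H
  · simp; positivity
  rw [Finset.sum_range_succ', add_comm]
  gcongr
  · simp
  have hanti : AntitoneOn (fun x : ℝ => Real.exp (-a * x^2)) (Set.Icc (0:ℝ) (0 + (H:ℝ))) := by
    intro x hx y hy hxy
    simp only
    apply Real.exp_le_exp.2
    have : x^2 ≤ y^2 := pow_le_pow_left₀ hx.1 hxy 2
    nlinarith
  have h1 := hanti.sum_le_integral
  simp only [zero_add] at h1
  refine h1.trans ?_
  rw [← integral_gaussian_Ioi, intervalIntegral.integral_of_le (by positivity)]
  apply MeasureTheory.setIntegral_mono_set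
  · exact (integrable_exp_neg_mul_sq ha).integrableOn
  · exact Filter.Eventually.of_forall fun x => (Real.exp_pos _).le
  · exact Filter.Eventually.of_forall fun x hx => hx.1

theorem per_sum (G : ℝ → ℝ) (Q : ℕ) (hG : ∀ x, G (x + Q) = G x) :
    Function.Periodic (fun x => ∑ j ∈ range Q, G (j + x)) 1 := by
  intro x
  simp only
  have h1 := Finset.sum_range_succ (fun j : ℕ => G (j + x)) Q
  have h2 := Finset.sum_range_succ' (fun j : ℕ => G (j + x)) Q
  have h3 : G ((Q:ℝ) + x) = G x := by rw [add_comm, hG]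
  simp only [Nat.cast_zero, zero_add, h3] at h1 h2
  rw [h1] at h2
  have h4 := add_right_cancel h2
  rw [h4]
  apply Finset.sum_congr rfl
  intro j _
  congr 1
  push_cast; ring

theorem circ_sum (b : ℝ) (hb : 0 < b) (H : ℕ) (hH : 0 < H) (α : ℝ) :
    ∑ j ∈ range (2*H), Real.exp (-(b * (1 - Real.cos (2 * Real.pi * j / ((2*H:ℕ):ℝ) - α)))) ≤ 2 + Real.sqrt (Real.pi / (2 * b / (H:ℝ)^2)) := by
  have hpi := Real.pi_pos
  have hH' : (0:ℝ) < H := by exact_mod_cast hH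
  set G : ℝ → ℝ := fun x => Real.exp (-(b * (1 - Real.cos (Real.pi * x / H)))) with hGdef
  have hG : ∀ x, G (x + ((2*H:ℕ):ℝ)) = G x := by
    intro x
    simp only [hGdef]
    have : Real.pi * (x + ((2*H:ℕ):ℝ)) / H = Real.pi * x / H + 2 * Real.pi := by
      push_cast; field_simp
    rw [this, Real.cos_add_two_pi]
  have hper := per_sum G (2*H) hG
  set x0 : ℝ := -(α * H / Real.pi) with hx0
  have h1 : ∑ j ∈ range (2*H), Real.exp (-(b * (1 - Real.cos (2 * Real.pi * j / ((2*H:ℕ):ℝ) - α)))) = ∑ j ∈ range (2*H), G (j + x0) := by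
    apply Finset.sum_congr rfl
    intro j _
    simp only [hGdef]
    congr 5
    rw [hx0]; push_cast; field_simp; ring
  have h2 : ∑ j ∈ range (2*H), G (j + x0) = ∑ j ∈ range (2*H), G (j + (Int.fract x0 - H)) := by
    have := hper.sub_zsmul_eq (x := x0) (⌊x0⌋ + H)
    simp only [zsmul_eq_mul, mul_one] at this
    rw [← this]
    apply Finset.sum_congr rfl
    intro j _
    congr 2
    rw [Int.fract]; push_cast; ring
  have hβ0 := Int.fract_nonneg x0
  have hβ1 := (Int.fract_lt_one x0).le
  set β := Int.fract x0
  have key : ∀ (y : ℝ) (i : ℕ), (i:ℝ) ≤ |y| → |y| ≤ H → G y ≤ Real.exp (-(2 * b / (H:ℝ)^2) * (i:ℝ)^2) := by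
    intro y i h1 h2
    simp only [hGdef]
    apply Real.exp_le_exp.2
    have hc := Real.cos_le_one_sub_mul_cos_sq (x := Real.pi * y / H) (by
      rw [abs_div, abs_mul, abs_of_pos hpi, abs_of_pos hH', div_le_iff₀ hH']
      exact mul_le_mul_of_nonneg_left h2 hpi.le)
    have e1 : 2 / Real.pi ^ 2 * (Real.pi * y / H) ^ 2 = 2 * y^2 / (H:ℝ)^2 := by field_simp
    have h3 : (i:ℝ)^2 ≤ y^2 := by rw [← sq_abs y]; exact pow_le_pow_left₀ (by positivity) h1 2
    have h4 : 2 * (i:ℝ)^2 / (H:ℝ)^2 ≤ 2 * y^2 / (H:ℝ)^2 := by gcongr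
    have h5 : -(2 * b / (H:ℝ)^2) * (i:ℝ)^2 = - (b * (2 * (i:ℝ)^2 / (H:ℝ)^2)) := by ring
    rw [h5]
    apply neg_le_neg
    apply mul_le_mul_of_nonneg_left _ hb.le
    linarith
  have hg := gauss_half (2 * b / (H:ℝ)^2) (by positivity) H
  rw [h1, h2, two_mul, Finset.sum_range_add]
  have hA : ∑ j ∈ range H, G (j + (β - H)) ≤ ∑ i ∈ range H, Real.exp (-(2 * b / (H:ℝ)^2) * (i:ℝ)^2) := by
    rw [← Finset.sum_range_reflect (fun i : ℕ => Real.exp (-(2 * b / (H:ℝ)^2) * (i:ℝ)^2))]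
    apply Finset.sum_le_sum
    intro j hj
    have hj' : j + 1 ≤ H := Finset.mem_range.1 hj
    have hj2 : (j:ℝ) + 1 ≤ H := by exact_mod_cast hj'
    have hj0 : (0:ℝ) ≤ j := by positivity
    apply key
    · rw [abs_of_nonpos (by linarith), Nat.sub_sub, Nat.cast_sub (by omega)]; push_cast; linarith
    · rw [abs_of_nonpos (by linarith)]; linarith
  have hB : ∑ j ∈ range H, G (((H + j : ℕ):ℝ) + (β - H)) ≤ ∑ i ∈ range H, Real.exp (-(2 * b / (H:ℝ)^2) * (i:ℝ)^2) := by
    apply Finset.sum_le_sum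
    intro j hj
    have hj' : j + 1 ≤ H := Finset.mem_range.1 hj
    have hj2 : (j:ℝ) + 1 ≤ H := by exact_mod_cast hj'
    have hj0 : (0:ℝ) ≤ j := by positivity
    apply key
    · push_cast; rw [abs_of_nonneg (by linarith)]; linarith
    · push_cast; rw [abs_of_nonneg (by linarith)]; linarith
  linarith

/-- average of the Gaussian-like factor -/
theorem circ_avg (μ n : ℕ) (hμ : 1 ≤ μ) (hn : μ ≤ n) (α : ℝ) :
    ∑ j : Fin (2*(100*n)), Real.exp (-(0.8 * (μ:ℝ) * (1 - Real.cos (2 * Real.pi * j.val / ((2*(100*n):ℕ):ℝ) - α)))) ≤ ((2*(100*n):ℕ):ℝ) * (1.95 / (Real.exp 1 * Real.sqrt μ)) := by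
  have hμ' : (1:ℝ) ≤ μ := by exact_mod_cast hμ
  have hn' : (μ:ℝ) ≤ n := by exact_mod_cast hn
  have h := circ_sum (0.8 * μ) (by positivity) (100*n) (by omega) α
  rw [← Fin.sum_univ_eq_sum_range (fun j : ℕ => Real.exp (-(0.8 * (μ:ℝ) * (1 - Real.cos (2 * Real.pi * j / ((2*(100*n):ℕ):ℝ) - α)))))] at h
  refine h.trans ?_
  have hs : Real.sqrt μ ^ 2 = μ := Real.sq_sqrt (by positivity)
  have hs1 : 1 ≤ Real.sqrt μ := Real.one_le_sqrt.2 hμ'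
  have e1 : Real.sqrt (Real.pi / (2 * (0.8 * μ) / (((100*n:ℕ):ℝ))^2)) ≤ 2 * (100 * n) * 0.701 / Real.sqrt μ := by
    apply Real.sqrt_le_iff.2
    constructor
    · positivity
    · rw [div_pow, hs]
      push_cast
      rw [div_div_eq_mul_div, div_le_div_iff₀ (by positivity) (by positivity)]
      have := Real.pi_lt_d4
      have h1 : (0:ℝ) < (100*n)^2 * μ := by have : (0:ℝ) < n := by linarith
                                            positivity
      nlinarith
  have e2 : (2:ℝ) ≤ 2 * (100 * n) * 0.011 / Real.sqrt μ := by
    rw [le_div_iff₀ (by positivity)]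
    have : Real.sqrt μ ≤ μ := by nlinarith
    nlinarith
  have e3 : (0.712:ℝ) ≤ 1.95 / Real.exp 1 := by
    rw [le_div_iff₀ (Real.exp_pos _)]
    have := Real.exp_one_lt_d9
    nlinarith
  calc _ ≤ 2 * (100 * n) * 0.011 / Real.sqrt μ + 2 * (100 * n) * 0.701 / Real.sqrt μ := add_le_add e2 e1
    _ = 2 * (100 * n) * (0.712 / Real.sqrt μ) := by ring
    _ ≤ 2 * (100 * n) * ((1.95 / Real.exp 1) / Real.sqrt μ) := by gcongr
    _ = _ := by push_cast; rw [div_div]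

theorem stirling_lo (m : ℕ) (hm : 1 ≤ m) : Real.sqrt m * ((m:ℝ) / Real.exp 1)^m ≤ m.factorial := by
  refine le_trans ?_ (Stirling.le_factorial_stirling m)
  gcongr
  have := Real.pi_gt_three
  have : (0:ℝ) ≤ m := by positivity
  nlinarith

theorem stirling_hi (m : ℕ) (hm : 1 ≤ m) : (m.factorial : ℝ) ≤ Real.exp 1 * Real.sqrt m * ((m:ℝ) / Real.exp 1)^m := by
  obtain ⟨j, rfl⟩ : ∃ j, m = j + 1 := ⟨m - 1, by omega⟩
  have h := Stirling.stirlingSeq'_antitone (Nat.zero_le j)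
  simp only [Function.comp, Nat.succ_eq_add_one, zero_add, Stirling.stirlingSeq_one] at h
  rw [Stirling.stirlingSeq, div_le_iff₀ (by positivity)] at h
  refine h.trans (le_of_eq ?_)
  rw [Real.sqrt_mul (by norm_num)]
  field_simp


theorem cos_shift (x d : ℝ) : 0.8 * (1 - Real.cos (x + d)) ≤ 0.9 * (1 - Real.cos x) + 3.6 * d^2 := by
  have e : ∀ y : ℝ, 1 - Real.cos y = 2 * Real.sin (y/2)^2 := by
    intro y
    have := Real.cos_sq (y/2)
    have h2 := Real.sin_sq_add_cos_sq (y/2)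
    rw [mul_div_cancel₀ _ (by norm_num : (2:ℝ) ≠ 0)] at this
    linarith
  rw [e, e]
  have h1 : Real.sin ((x+d)/2) = Real.sin (x/2) * Real.cos (d/2) + Real.cos (x/2) * Real.sin (d/2) := by
    rw [← Real.sin_add]; congr 1; ring
  set s := Real.sin (x/2)
  set t := Real.sin ((x+d)/2)
  have h2 : |t| ≤ |s| + |d/2| := by
    rw [h1]
    refine (abs_add_le _ _).trans ?_
    rw [abs_mul, abs_mul]
    have a1 := Real.abs_cos_le_one (d/2)
    have a2 := Real.abs_cos_le_one (x/2)
    have a3 : |Real.sin (d/2)| ≤ |d/2| := Real.abs_sin_le_abs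
    have : |Real.cos (x/2)| * |Real.sin (d/2)| ≤ 1 * |d/2| := by gcongr
    have : |s| * |Real.cos (d/2)| ≤ |s| * 1 := by gcongr
    linarith
  have h3 : t^2 ≤ (|s| + |d/2|)^2 := by rw [← sq_abs t]; gcongr
  have h4 : |s|^2 = s^2 := sq_abs s
  have h5 : |d/2|^2 = d^2/4 := by rw [sq_abs]; ring
  nlinarith [sq_nonneg (|s| - 8 * |d/2|)]

theorem grid_pt (G : ℕ) (hG : 0 < G) (φ : ℝ) : ∃ g : Fin G, ∀ (ℓ : ℕ) (ψ : ℝ),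
    0.8 * (1 - Real.cos (ψ - ℓ * (2 * Real.pi * g.val / G))) ≤ 0.9 * (1 - Real.cos (ψ - ℓ * φ)) + 3.6 * (ℓ * (2 * Real.pi / G))^2 := by
  have hG' : (0:ℝ) < G := by exact_mod_cast hG
  have hpi := Real.pi_pos
  set y := Int.fract (φ / (2 * Real.pi)) with hy
  have y0 : 0 ≤ y := Int.fract_nonneg _
  have y1 : y < 1 := Int.fract_lt_one _
  have hlt : ⌊y * G⌋₊ < G := by
    rw [Nat.floor_lt (by positivity)]
    nlinarith
  refine ⟨⟨_, hlt⟩, fun ℓ ψ => ?_⟩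
  simp only
  have f1 := Nat.floor_le (a := y * G) (by positivity)
  have f2 := Nat.lt_floor_add_one (y * G)
  set g := ⌊y * G⌋₊
  set N := ⌊φ / (2 * Real.pi)⌋ with hN
  have hφ : φ = 2 * Real.pi * (N + y) := by
    rw [hN, hy, Int.floor_add_fract]; field_simp
  have h := cos_shift (ψ - ℓ * φ) (ℓ * (2 * Real.pi * (y - g / G)))
  have e1 : Real.cos (ψ - ℓ * φ + ℓ * (2 * Real.pi * (y - g / G))) = Real.cos (ψ - ℓ * (2 * Real.pi * g / G)) := by
    rw [hφ]
    have : ψ - ℓ * (2 * Real.pi * (N + y)) + ℓ * (2 * Real.pi * (y - g / G)) = (ψ - ℓ * (2 * Real.pi * g / G)) - ((ℓ * N : ℤ) : ℝ) * (2 * Real.pi) := by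
      push_cast; ring
    rw [this, Real.cos_sub_int_mul_two_pi]
  rw [e1] at h
  refine h.trans ?_
  gcongr
  · have : (g:ℝ) / G ≤ y := by rw [div_le_iff₀ hG']; exact f1
    have := sub_nonneg.2 this
    positivity
  · have : y - g / G ≤ 1 / G := by
      rw [sub_le_iff_le_add, ← add_div, le_div_iff₀ hG']; linarith
    calc 2 * Real.pi * (y - g/G) ≤ 2 * Real.pi * (1 / G) := by gcongr
      _ = _ := by ring

noncomputable def ww (μ : ℕ) : ℝ := if μ = 0 then 1 else 1.95 / (Real.exp 1 * Real.sqrt μ)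
noncomputable def vv (μ : ℕ) : ℝ := if μ = 0 then 1 else Real.exp 1 * Real.sqrt μ

theorem vv_pos (μ : ℕ) : 0 < vv μ := by
  unfold vv; split_ifs with h
  · norm_num
  · have : (0:ℝ) < μ := by exact_mod_cast Nat.pos_of_ne_zero h
    positivity

theorem ww_nonneg (μ : ℕ) : 0 ≤ ww μ := by
  unfold ww; split_ifs <;> positivity

theorem vw_le (μ : ℕ) : vv μ * ww μ ≤ 1.95 := by
  unfold vv ww; split_ifs with h
  · norm_num
  · have : (0:ℝ) < μ := by exact_mod_cast Nat.pos_of_ne_zero h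
    apply le_of_eq
    field_simp

theorem vv_le (μ n : ℕ) (h : μ ≤ n) (hn : 1 ≤ n) : vv μ ≤ Real.exp 1 * Real.sqrt n := by
  have h1 : (1:ℝ) ≤ Real.sqrt n := Real.one_le_sqrt.2 (by exact_mod_cast hn)
  have h2 : (1:ℝ) ≤ Real.exp 1 := by have := Real.add_one_le_exp (1:ℝ); linarith
  unfold vv; split_ifs
  · nlinarith
  · gcongr

theorem circ_w (μ n : ℕ) (hn : μ ≤ n) (α : ℝ) :
    ∑ j : Fin (2*(100*n)), Real.exp (-(0.8 * (μ:ℝ) * (1 - Real.cos (2 * Real.pi * j.val / ((2*(100*n):ℕ):ℝ) - α)))) ≤ ((2*(100*n):ℕ):ℝ) * ww μ := by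
  unfold ww
  split_ifs with h
  · simp [h]
  · exact circ_avg μ n (Nat.pos_of_ne_zero h) hn α

theorem near_sum (L n : ℕ) (μ : Fin L → ℕ) (hμ : ∀ i, μ i ≤ n) (α : Fin L → ℝ) :
    ∑ θ : Fin L → Fin (2*(100*n)), Real.exp (-(∑ i, 0.8 * (μ i:ℝ) * (1 - Real.cos (2 * Real.pi * (θ i).val / ((2*(100*n):ℕ):ℝ) - α i)))) ≤ ((2*(100*n):ℕ):ℝ)^L * ∏ i, ww (μ i) := by
  simp_rw [← Finset.sum_neg_distrib, Real.exp_sum]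
  rw [← Fintype.piFinset_univ, ← Finset.prod_univ_sum (fun _ => Finset.univ) (fun i (j : Fin (2*(100*n))) => Real.exp (-(0.8 * (μ i:ℝ) * (1 - Real.cos (2 * Real.pi * j.val / ((2*(100*n):ℕ):ℝ) - α i)))))]
  have : ((2*(100*n):ℕ):ℝ)^L * ∏ i, ww (μ i) = ∏ i : Fin L, (((2*(100*n):ℕ):ℝ) * ww (μ i)) := by
    rw [Finset.prod_mul_distrib]; simp
  rw [this]
  apply Finset.prod_le_prod
  · intro i _; positivity
  · intro i _; exact circ_w _ _ (hμ i) _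

theorem fact_ratio (μ m : ℕ) (hm : 0 < m) : (μ.factorial : ℝ) ≤ vv μ * ((m:ℝ) / Real.exp 1)^μ * ((μ:ℝ)/m)^μ := by
  have hm' : (0:ℝ) < m := by exact_mod_cast hm
  rcases Nat.eq_zero_or_pos μ with h | h
  · simp [h, vv]
  · have := stirling_hi μ h
    unfold vv
    rw [if_neg h.ne', mul_assoc, ← mul_pow]
    convert this using 3
    field_simp

theorem final_bound {n m k L : ℕ} (hn : 0 < n) (hk : 0 < k) (hkn : k ∣ n) (μ : Fin L →₀ ℕ) (hsz : sz μ = m) (hwt : wt μ = n)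
    (A B K : ℝ) (hA : 0 ≤ A) (hB : 0 ≤ B) (G : ℕ) (hG : n ≤ G^2)
    (hK : ∑ i, (μ i : ℝ) * ((i.val:ℝ)+1)^2 ≤ K * n)
    (hyp : ∀ ψ : Fin L → ℝ,
      ‖Matrix.trace (Mx L (fun i => (((μ i : ℝ)/m : ℝ) : ℂ) * Complex.exp ((ψ i : ℂ) * Complex.I)) ^ k) ^ (n/k)
        - Matrix.trace (Mx L (fun i => (((μ i : ℝ)/m : ℝ) : ℂ) * Complex.exp ((ψ i : ℂ) * Complex.I)) ^ n)‖ ≤ B ∨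
      ∃ φ : ℝ, ‖Matrix.trace (Mx L (fun i => (((μ i : ℝ)/m : ℝ) : ℂ) * Complex.exp ((ψ i : ℂ) * Complex.I)) ^ k) ^ (n/k)
        - Matrix.trace (Mx L (fun i => (((μ i : ℝ)/m : ℝ) : ℂ) * Complex.exp ((ψ i : ℂ) * Complex.I)) ^ n)‖ ≤
        A * Real.exp (-(0.9 * ∑ i, (μ i : ℝ) * (1 - Real.cos (ψ i - ((i.val:ℝ)+1) * φ))))) :
    (((∏ i, (μ i).factorial) * MvPolynomial.coeff μ ((cyc L k) ^ (n / k)) : ℕ) : ℝ) ≤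
      m.factorial * ((n:ℝ)/m + (B * (Real.exp 1 * Real.sqrt n)^L + A * Real.exp (144 * K) * G * 1.95^L) / Real.sqrt m) := by
  classical
  have hm : 0 < m := by
    by_contra h0
    have : sz μ = 0 := by omega
    unfold sz at this
    rw [Finset.sum_eq_zero_iff] at this
    have h2 : wt μ = 0 := by
      unfold wt
      apply Finset.sum_eq_zero
      intro i hi; rw [this i hi, mul_zero]
    omega
  have hm' : (0:ℝ) < m := by exact_mod_cast hm
  have hn' : (0:ℝ) < n := by exact_mod_cast hn
  have hG0 : 0 < G := by
    rcases Nat.eq_zero_or_pos G with h | h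
    · subst h; simp at hG; omega
    · exact h
  have hG0' : (0:ℝ) < G := by exact_mod_cast hG0
  have hμn : ∀ i, μ i ≤ n := by
    intro i
    rw [← hwt]
    unfold wt
    refine le_trans ?_ (Finset.single_le_sum (f := fun i : Fin L => (i.val+1) * μ i) (fun _ _ => Nat.zero_le _) (Finset.mem_univ i))
    nlinarith [Nat.zero_le (i.val * μ i)]
  set Q := 2*(100*n) with hQ
  have hQ0 : (0:ℝ) < Q := by rw [hQ]; push_cast; positivity
  set p : Fin L → ℝ := fun i => (μ i : ℝ)/m with hp
  have hdeg1 : ((cyc L k)^(n/k)).totalDegree ≤ n := by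
    refine (MvPolynomial.totalDegree_pow _ _).trans ?_
    calc n / k * (cyc L k).totalDegree ≤ n / k * k := Nat.mul_le_mul_left _ (totalDegree_cyc L k hk)
      _ = n := Nat.div_mul_cancel hkn
  have hF := fourier_bound L Q n (by omega) ((cyc L k)^(n/k)) (cyc L n) hdeg1 (totalDegree_cyc L n hn) μ hμn p
  have hbound : ∀ θ : Fin L → Fin Q,
      ‖MvPolynomial.aeval (fun i => (p i : ℂ) * Complex.exp (((2*Real.pi*(θ i).val/Q : ℝ) : ℂ) * Complex.I)) ((cyc L k)^(n/k))
        - MvPolynomial.aeval (fun i => (p i : ℂ) * Complex.exp (((2*Real.pi*(θ i).val/Q : ℝ) : ℂ) * Complex.I)) (cyc L n)‖ ≤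
      B + ∑ g : Fin G, (A * Real.exp (144 * K)) * Real.exp (-(∑ i, 0.8 * (μ i:ℝ) * (1 - Real.cos (2 * Real.pi * (θ i).val / (Q:ℝ) - ((i.val+1 : ℕ):ℝ) * (2*Real.pi*g.val/G))))) := by
    intro θ
    rw [map_pow, aeval_cyc L k hk, aeval_cyc L n hn]
    rcases hyp (fun i => 2*Real.pi*(θ i).val/Q) with h | ⟨φ, h⟩
    · refine h.trans ?_
      have : 0 ≤ ∑ g : Fin G, (A * Real.exp (144 * K)) * Real.exp (-(∑ i, 0.8 * (μ i:ℝ) * (1 - Real.cos (2 * Real.pi * (θ i).val / (Q:ℝ) - ((i.val+1 : ℕ):ℝ) * (2*Real.pi*g.val/G))))) :=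
        Finset.sum_nonneg fun _ _ => by positivity
      linarith
    · refine h.trans ?_
      obtain ⟨g, hg⟩ := grid_pt G hG0 φ
      have h1 : A * Real.exp (-(0.9 * ∑ i, (μ i : ℝ) * (1 - Real.cos (2*Real.pi*(θ i).val/Q - ((i.val:ℝ)+1) * φ)))) ≤
        (A * Real.exp (144 * K)) * Real.exp (-(∑ i, 0.8 * (μ i:ℝ) * (1 - Real.cos (2 * Real.pi * (θ i).val / (Q:ℝ) - ((i.val+1 : ℕ):ℝ) * (2*Real.pi*g.val/G))))) := by
        rw [mul_assoc, ← Real.exp_add]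
        apply mul_le_mul_of_nonneg_left _ hA
        apply Real.exp_le_exp.2
        have hs : ∑ i, 0.8 * (μ i:ℝ) * (1 - Real.cos (2 * Real.pi * (θ i).val / (Q:ℝ) - ((i.val+1 : ℕ):ℝ) * (2*Real.pi*g.val/G))) ≤
            0.9 * ∑ i, (μ i : ℝ) * (1 - Real.cos (2*Real.pi*(θ i).val/Q - ((i.val:ℝ)+1) * φ)) + 3.6 * (2*Real.pi/G)^2 * ∑ i, (μ i : ℝ) * ((i.val:ℝ)+1)^2 := by
          rw [Finset.mul_sum, Finset.mul_sum, ← Finset.sum_add_distrib]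
          apply Finset.sum_le_sum
          intro i _
          have := mul_le_mul_of_nonneg_left (hg (i.val+1) (2*Real.pi*(θ i).val/Q)) (by positivity : (0:ℝ) ≤ μ i)
          push_cast at this ⊢
          nlinarith
        have hs2 : 3.6 * (2*Real.pi/G)^2 * ∑ i, (μ i : ℝ) * ((i.val:ℝ)+1)^2 ≤ 144 * K := by
          have hKn : 0 ≤ K * n := le_trans (Finset.sum_nonneg fun _ _ => by positivity) hK
          have hK0 : 0 ≤ K := nonneg_of_mul_nonneg_left hKn hn'
          have hG2 : (n:ℝ) ≤ G^2 := by exact_mod_cast hG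
          have hpi : Real.pi^2 ≤ 10 := by have := Real.pi_lt_d4; have := Real.pi_pos; nlinarith
          calc 3.6 * (2*Real.pi/G)^2 * ∑ i, (μ i : ℝ) * ((i.val:ℝ)+1)^2 ≤ 3.6 * (2*Real.pi/G)^2 * (K * n) := by gcongr
            _ ≤ 3.6 * (2*Real.pi/G)^2 * (K * G^2) := by gcongr
            _ = 14.4 * K * Real.pi^2 := by field_simp; ring
            _ ≤ 14.4 * K * 10 := by gcongr
            _ = _ := by ring
        linarith
      refine h1.trans ?_
      have := Finset.single_le_sum (f := fun g : Fin G => (A * Real.exp (144 * K)) * Real.exp (-(∑ i, 0.8 * (μ i:ℝ) * (1 - Real.cos (2 * Real.pi * (θ i).val / (Q:ℝ) - ((i.val+1 : ℕ):ℝ) * (2*Real.pi*g.val/G)))))) (fun _ _ => by positivity) (Finset.mem_univ g)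
      linarith
  have hsum := hF.trans (Finset.sum_le_sum fun θ _ => hbound θ)
  rw [Finset.sum_add_distrib, Finset.sum_comm] at hsum
  have hnear : ∑ g : Fin G, ∑ θ : Fin L → Fin Q, (A * Real.exp (144 * K)) * Real.exp (-(∑ i, 0.8 * (μ i:ℝ) * (1 - Real.cos (2 * Real.pi * (θ i).val / (Q:ℝ) - ((i.val+1 : ℕ):ℝ) * (2*Real.pi*g.val/G)))))
      ≤ ∑ g : Fin G, (A * Real.exp (144 * K)) * ((Q:ℝ)^L * ∏ i, ww (μ i)) := by
    apply Finset.sum_le_sum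
    intro g _
    rw [← Finset.mul_sum]
    apply mul_le_mul_of_nonneg_left _ (by positivity)
    exact near_sum L n μ hμn (fun i => ((i.val+1 : ℕ):ℝ) * (2*Real.pi*g.val/G))
  have hsum2 := hsum.trans (add_le_add le_rfl hnear)
  simp only [Finset.sum_const, Finset.card_univ, Fintype.card_pi, Fintype.card_fin, Finset.prod_const, nsmul_eq_mul, Nat.cast_pow] at hsum2
  have hsum3 : (∏ i, p i ^ μ i) * (((MvPolynomial.coeff μ ((cyc L k)^(n/k)) : ℕ) : ℝ) - ((MvPolynomial.coeff μ (cyc L n) : ℕ) : ℝ)) ≤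
      B + G * (A * Real.exp (144 * K) * ∏ i, ww (μ i)) := by
    have hQL : (0:ℝ) < (Q:ℝ)^L := by positivity
    refine le_of_mul_le_mul_left ?_ hQL
    nlinarith [hsum2]
  set f : ℝ := ((MvPolynomial.coeff μ ((cyc L k)^(n/k)) : ℕ) : ℝ)
  set g : ℝ := ((MvPolynomial.coeff μ (cyc L n) : ℕ) : ℝ) with hg
  set E : ℝ := B + G * (A * Real.exp (144 * K) * ∏ i, ww (μ i)) with hE
  have hww : 0 ≤ ∏ i, ww (μ i) := Finset.prod_nonneg fun i _ => ww_nonneg _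
  have hE0 : 0 ≤ E := by positivity
  have hmain : ((∏ i, (μ i).factorial : ℕ) : ℝ) * g = m.factorial * ((n:ℝ)/m) := by
    have h := coeff_cyc μ (by omega)
    rw [hwt, hsz] at h
    have h' : g * ((∏ i, (μ i).factorial : ℕ):ℝ) = n * ((m-1).factorial : ℝ) := by
      rw [hg]; exact_mod_cast h
    rw [mul_comm, h']
    have : (m.factorial : ℝ) = m * ((m-1).factorial : ℝ) := by
      exact_mod_cast (Nat.mul_factorial_pred hm.ne').symm
    rw [this]; field_simp
  set V := ∏ i, vv (μ i) with hV
  have hV0 : 0 ≤ V := Finset.prod_nonneg fun i _ => (vv_pos _).le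
  have hprod : ((∏ i, (μ i).factorial : ℕ) : ℝ) ≤ V * ((m:ℝ)/Real.exp 1)^m * ∏ i, p i ^ μ i := by
    have e1 : ((m:ℝ)/Real.exp 1)^m = ∏ i, ((m:ℝ)/Real.exp 1)^(μ i) := by
      rw [Finset.prod_pow_eq_pow_sum]; congr 1; exact hsz.symm
    rw [e1, hV, ← Finset.prod_mul_distrib, ← Finset.prod_mul_distrib]
    push_cast
    apply Finset.prod_le_prod
    · intro i _; positivity
    · intro i _; exact fact_ratio _ _ hm
  have hst := stirling_lo m hm
  have hsq : 0 < Real.sqrt m := by positivity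
  have hVE : V * E ≤ B * (Real.exp 1 * Real.sqrt n)^L + A * Real.exp (144 * K) * G * 1.95^L := by
    have h1 : V ≤ (Real.exp 1 * Real.sqrt n)^L := by
      calc V ≤ ∏ i : Fin L, (Real.exp 1 * Real.sqrt n) := Finset.prod_le_prod (fun i _ => (vv_pos _).le) (fun i _ => vv_le _ _ (hμn i) hn)
        _ = _ := by simp
    have h2 : V * ∏ i, ww (μ i) ≤ 1.95^L := by
      rw [hV, ← Finset.prod_mul_distrib]
      calc _ ≤ ∏ i : Fin L, (1.95:ℝ) := Finset.prod_le_prod (fun i _ => mul_nonneg (vv_pos _).le (ww_nonneg _)) (fun i _ => vw_le _)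
        _ = _ := by simp
    have h3 := mul_le_mul_of_nonneg_left h1 hB
    have h4 := mul_le_mul_of_nonneg_left h2 (by positivity : 0 ≤ A * Real.exp (144 * K) * G)
    rw [hE]; nlinarith
  have hdiff : ((∏ i, (μ i).factorial : ℕ) : ℝ) * (f - g) ≤ m.factorial * ((B * (Real.exp 1 * Real.sqrt n)^L + A * Real.exp (144 * K) * G * 1.95^L) / Real.sqrt m) := by
    have hR0 : 0 ≤ m.factorial * ((B * (Real.exp 1 * Real.sqrt n)^L + A * Real.exp (144 * K) * G * 1.95^L) / Real.sqrt m) := by positivity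
    rcases le_or_gt (f - g) 0 with h | h
    · exact le_trans (mul_nonpos_of_nonneg_of_nonpos (by positivity) h) hR0
    · calc ((∏ i, (μ i).factorial : ℕ) : ℝ) * (f - g) ≤ V * ((m:ℝ)/Real.exp 1)^m * (∏ i, p i ^ μ i) * (f - g) := by gcongr
        _ = V * ((m:ℝ)/Real.exp 1)^m * ((∏ i, p i ^ μ i) * (f - g)) := by ring
        _ ≤ V * ((m:ℝ)/Real.exp 1)^m * E := by gcongr
        _ = (V * E) * ((m:ℝ)/Real.exp 1)^m := by ring
        _ ≤ (V * E) * (m.factorial / Real.sqrt m) := by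
            gcongr
            rw [le_div_iff₀ hsq]; linarith
        _ ≤ (B * (Real.exp 1 * Real.sqrt n)^L + A * Real.exp (144 * K) * G * 1.95^L) * (m.factorial / Real.sqrt m) := by gcongr
        _ = _ := by ring
  rw [Nat.cast_mul]
  calc ((∏ i, (μ i).factorial : ℕ) : ℝ) * f = ((∏ i, (μ i).factorial : ℕ) : ℝ) * g + ((∏ i, (μ i).factorial : ℕ) : ℝ) * (f - g) := by ring
    _ ≤ _ := by rw [mul_add, hmain]; linarith


theorem mset_pow_norm (Λ : Multiset ℂ) (b : ℝ) (hb : 0 ≤ b) (h : ∀ l ∈ Λ, ‖l‖ ≤ b) (k : ℕ) :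
    ‖(Λ.map fun l => l^k).sum‖ ≤ Multiset.card Λ * b^k := by
  induction Λ using Multiset.induction with
  | empty => simp
  | cons a Λ ih =>
    rw [Multiset.map_cons, Multiset.sum_cons, Multiset.card_cons]
    have h1 := ih fun l hl => h l (Multiset.mem_cons_of_mem hl)
    have h2 : ‖a^k‖ ≤ b^k := by
      rw [norm_pow]; exact pow_le_pow_left₀ (norm_nonneg _) (h a (Multiset.mem_cons_self _ _)) k
    push_cast
    have := norm_add_le (a^k) (Λ.map fun l => l^k).sum
    linarith

theorem pow_diff_norm (a e : ℂ) (q : ℕ) : ‖(a+e)^q - a^q‖ ≤ (‖a‖+‖e‖)^q - ‖a‖^q := by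
  induction q with
  | zero => simp
  | succ q ih =>
    have e1 : (a+e)^(q+1) - a^(q+1) = (a+e)^q * e + ((a+e)^q - a^q) * a := by ring
    rw [e1]
    refine (norm_add_le _ _).trans ?_
    rw [norm_mul, norm_mul, norm_pow]
    have h1 : ‖a+e‖^q ≤ (‖a‖+‖e‖)^q := pow_le_pow_left₀ (norm_nonneg _) (norm_add_le _ _) q
    have h2 := mul_le_mul_of_nonneg_right h1 (norm_nonneg e)
    have h3 := mul_le_mul_of_nonneg_right ih (norm_nonneg a)
    calc _ ≤ (‖a‖+‖e‖)^q * ‖e‖ + ((‖a‖+‖e‖)^q - ‖a‖^q) * ‖a‖ := add_le_add h2 h3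
      _ = _ := by ring

theorem far_bound {n k L : ℕ} (hk : 0 < k) (hn : 0 < n) (hkn : k ∣ n) (Λ : Multiset ℂ) (hΛ : Multiset.card Λ = L)
    (s : ℝ) (hs : 1 < s) (hL : (L:ℝ) ≤ s^k) (h : ∀ l ∈ Λ, ‖l‖ ≤ 1/s^2) :
    ‖((Λ.map fun l => l^k).sum)^(n/k) - (Λ.map fun l => l^n).sum‖ ≤ 2 * (1/s)^n := by
  have hs0 : 0 < s := by linarith
  have hb : (0:ℝ) ≤ 1/s^2 := by positivity
  have h1 := mset_pow_norm Λ _ hb h k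
  have h2 := mset_pow_norm Λ _ hb h n
  rw [hΛ] at h1 h2
  have hkn' : k ≤ n := Nat.le_of_dvd hn hkn
  have e1 : (L:ℝ) * (1/s^2)^k ≤ (1/s)^k := by
    calc (L:ℝ) * (1/s^2)^k ≤ s^k * (1/s^2)^k := by gcongr
      _ = (1/s)^k := by rw [← mul_pow]; congr 1; field_simp
  have e2 : (L:ℝ) * (1/s^2)^n ≤ (1/s)^n := by
    calc (L:ℝ) * (1/s^2)^n ≤ s^n * (1/s^2)^n := by
          gcongr
          exact hL.trans (pow_le_pow_right₀ hs.le hkn')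
      _ = (1/s)^n := by rw [← mul_pow]; congr 1; field_simp
  have e3 : ‖((Λ.map fun l => l^k).sum)^(n/k)‖ ≤ (1/s)^n := by
    rw [norm_pow]
    calc _ ≤ ((1/s)^k)^(n/k) := pow_le_pow_left₀ (norm_nonneg _) (h1.trans e1) _
      _ = (1/s)^n := by rw [← pow_mul, Nat.mul_div_cancel' hkn]
  have := norm_sub_le (((Λ.map fun l => l^k).sum)^(n/k)) ((Λ.map fun l => l^n).sum)
  linarith

theorem near_bound {n k L : ℕ} (hk : 0 < k) (hn : 0 < n) (hkn : k ∣ n) (Λ : Multiset ℂ) (hΛ : Multiset.card Λ = L)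
    (c R ρ : ℝ) (hc : 0 < c) (hR : 0 < R) (hρ : (1+c)/R ≤ ρ) (hρ1 : ρ ≤ 1) (hx : (n:ℝ) * (L * ρ^k) ≤ 1)
    (l1 : ℂ) (hl1 : l1 ∈ Λ) (hl : 1/(1+c) ≤ ‖l1‖) (h : ∀ l ∈ Λ.erase l1, ‖l‖ ≤ 1/R) :
    ‖((Λ.map fun l => l^k).sum)^(n/k) - (Λ.map fun l => l^n).sum‖ ≤ 3 * (n * (L * ρ^k)) * ‖l1‖^n := by
  have hρ0 : 0 ≤ ρ := le_trans (by positivity) hρ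
  have hcard : ((Multiset.card (Λ.erase l1) : ℕ):ℝ) ≤ L := by
    rw [← hΛ]; exact_mod_cast Multiset.card_le_card (Multiset.erase_le l1 Λ)
  have hdec : ∀ j : ℕ, (Λ.map fun l => l^j).sum = l1^j + ((Λ.erase l1).map fun l => l^j).sum := by
    intro j
    conv_lhs => rw [← Multiset.cons_erase hl1]
    rw [Multiset.map_cons, Multiset.sum_cons]
  have hrest : ∀ j : ℕ, ‖((Λ.erase l1).map fun l => l^j).sum‖ ≤ L * ρ^j * ‖l1‖^j := by
    intro j
    refine (mset_pow_norm _ _ (by positivity) h j).trans ?_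
    rw [mul_assoc, ← mul_pow]
    have h1 : 1/R ≤ ρ * ‖l1‖ := by
      calc 1/R = (1+c)/R * (1/(1+c)) := by field_simp
        _ ≤ ρ * ‖l1‖ := by gcongr
    gcongr
  set x := (L:ℝ) * ρ^k with hxdef
  have hx0 : 0 ≤ x := by positivity
  have hkn' : k ≤ n := Nat.le_of_dvd hn hkn
  rw [hdec k, hdec n]
  set e := ((Λ.erase l1).map fun l => l^k).sum
  set e' := ((Λ.erase l1).map fun l => l^n).sum
  have hn1 : (1:ℝ) ≤ n := by exact_mod_cast hn
  have he' : ‖e'‖ ≤ n * x * ‖l1‖^n := by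
    refine (hrest n).trans ?_
    apply mul_le_mul_of_nonneg_right _ (by positivity)
    calc (L:ℝ) * ρ^n ≤ L * ρ^k := by gcongr ?_ * ?_; exact pow_le_pow_of_le_one hρ0 hρ1 hkn'
      _ = 1 * x := by rw [hxdef]; ring
      _ ≤ n * x := by gcongr
  have hd := pow_diff_norm (l1^k) e (n/k)
  have hpk : (l1^k)^(n/k) = l1^n := by rw [← pow_mul, Nat.mul_div_cancel' hkn]
  have hq : ((n/k : ℕ):ℝ) ≤ n := by exact_mod_cast Nat.div_le_self n k
  have hqx : ((n/k : ℕ):ℝ) * x ≤ n * x := by gcongr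
  have hbig : (‖l1^k‖+‖e‖)^(n/k) - ‖l1^k‖^(n/k) ≤ 2 * (n * x) * ‖l1‖^n := by
    have h1 : ‖l1^k‖+‖e‖ ≤ ‖l1‖^k * (1+x) := by
      rw [norm_pow]; have := hrest k; nlinarith
    have h2 : (‖l1^k‖+‖e‖)^(n/k) ≤ (‖l1‖^k * (1+x))^(n/k) := pow_le_pow_left₀ (by positivity) h1 _
    have h3 : (1+x)^(n/k) ≤ 1 + 2 * (n*x) := by
      calc (1+x)^(n/k) ≤ (Real.exp x)^(n/k) := pow_le_pow_left₀ (by positivity) (by have := Real.add_one_le_exp x; linarith) _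
        _ = Real.exp ((n/k : ℕ) * x) := by rw [← Real.exp_nat_mul]
        _ ≤ Real.exp (n * x) := Real.exp_le_exp.2 hqx
        _ ≤ 1 + 2 * (n*x) := by
          have h0 : 0 ≤ (n:ℝ) * x := by positivity
          have := Real.abs_exp_sub_one_le (x := (n:ℝ)*x) (by rw [abs_of_nonneg h0]; exact hx)
          rw [abs_of_nonneg h0] at this
          have := (abs_le.1 this).2
          linarith
    rw [mul_pow, ← pow_mul, Nat.mul_div_cancel' hkn] at h2
    rw [norm_pow, ← pow_mul, Nat.mul_div_cancel' hkn]
    rw [norm_pow] at h2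
    have := mul_le_mul_of_nonneg_left h3 (by positivity : 0 ≤ ‖l1‖^n)
    linarith
  rw [hpk] at hd
  have e1 : (l1^k + e)^(n/k) - (l1^n + e') = ((l1^k + e)^(n/k) - l1^n) - e' := by ring
  rw [e1]
  have := norm_sub_le ((l1^k + e)^(n/k) - l1^n) e'
  linarith


theorem sum_range_xe {L : ℕ} (x : Fin L → ℝ) (f : ℕ → ℝ → ℝ) : ∑ i ∈ range L, f i (xe x i) = ∑ i : Fin L, f i.val (x i) := by
  rw [← Fin.sum_univ_eq_sum_range (fun i => f i (xe x i))]
  apply Finset.sum_congr rfl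
  intro i _
  rw [xe_val]

theorem core_bound {R R1 η0 : ℝ} (hR : 1 < R) (hRR : R < R1) (hR2 : R1 < 2) (hη : 0 < η0) : ∃ c τ0 : ℝ, 0 < c ∧ c < η0 ∧ 0 < τ0 ∧
    ∀ (n m k L : ℕ), 0 < n → 0 < k → k ∣ n → ∀ (μ : Fin L →₀ ℕ), sz μ = m → wt μ = n → 
    ∑ i ∈ range (L+1), |xe (fun i : Fin L => (μ i : ℝ)/m) i - gg i| * R1^(i+1) ≤ τ0 →
    ∀ (s ρ K : ℝ), 1 < s → s^2 = 1 + c → (L:ℝ) ≤ s^k → (1+c)/R ≤ ρ → ρ ≤ 1 → (n:ℝ) * (L * ρ^k) ≤ 1 →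
    ∑ i, (μ i : ℝ) * ((i.val:ℝ)+1)^2 ≤ K * n → ∀ G : ℕ, n ≤ G^2 → 
    (((∏ i, (μ i).factorial) * MvPolynomial.coeff μ ((cyc L k) ^ (n / k)) : ℕ) : ℝ) ≤
      m.factorial * ((n:ℝ)/m + ((2 * (1/s)^n) * (Real.exp 1 * Real.sqrt n)^L + (3 * (n * (L * ρ^k))) * Real.exp (144 * K) * G * 1.95^L) / Real.sqrt m) := by
  obtain ⟨c, τ0, hc, hcη, hτ, hroot⟩ := root_lemma hR hRR hR2 hη
  refine ⟨c, τ0, hc, hcη, hτ, ?_⟩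
  intro n m k L hn hk hkn μ hsz hwt hclose s ρ K hs hsc hLs hρ hρ1 hx hK G hG
  have hρ0 : 0 ≤ ρ := le_trans (by positivity) hρ
  have hm : 0 < m := by
    by_contra h0
    have : sz μ = 0 := by omega
    unfold sz at this
    rw [Finset.sum_eq_zero_iff] at this
    have h2 : wt μ = 0 := by
      unfold wt
      apply Finset.sum_eq_zero
      intro i hi; rw [this i hi, mul_zero]
    omega
  have hm' : (0:ℝ) < m := by exact_mod_cast hm
  apply final_bound hn hk hkn μ hsz hwt (3 * (n * (L * ρ^k))) (2 * (1/s)^n) K (by positivity) (by positivity) G hG hK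
  intro ψ
  obtain ⟨Λ, hcard, hpoly, htr⟩ := newton_roots L (fun i => (((μ i : ℝ)/m : ℝ) : ℂ) * Complex.exp ((ψ i : ℂ) * Complex.I))
  rw [htr k hk, htr n hn]
  set P : ℕ → ℝ := xe (fun i : Fin L => (μ i : ℝ)/m) with hP
  have hPv : ∀ i : Fin L, P i.val = (μ i : ℝ)/m := fun i => xe_val _ i
  have hP0 : ∀ i, 0 ≤ P i := by
    intro i
    rw [hP]; unfold xe; split_ifs
    · positivity
    · exact le_rfl
  have hPL : ∀ i, L ≤ i → P i = 0 := fun i hi => xe_ge _ hi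
  have hPs : ∑ i ∈ range L, P i = 1 := by
    rw [hP, sum_range_xe _ (fun _ y => y), ← Finset.sum_div, div_eq_one_iff_eq hm'.ne']
    rw [← hsz]; unfold sz; push_cast; rfl
  have hmean : ∑ i ∈ range L, ((i:ℝ)+1) * P i = n / m := by
    rw [hP, sum_range_xe _ (fun i y => ((i:ℝ)+1) * y), eq_div_iff hm'.ne', Finset.sum_mul, ← hwt]
    unfold wt; push_cast
    apply Finset.sum_congr rfl
    intro i _
    field_simp
  have hr := hroot L P hP0 hPL hPs hclose ψ Λ (by
    intro z
    rw [hpoly z]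
    simp only [hPv])
  rcases hr with hfar | ⟨l1, hl1, φ, hl, hrest, hlog⟩
  · left
    apply far_bound hk hn hkn Λ hcard s hs hLs
    rw [hsc]; exact hfar
  · right
    refine ⟨φ, ?_⟩
    refine (near_bound hk hn hkn Λ hcard c R ρ hc (by linarith) hρ hρ1 hx l1 hl1 hl hrest).trans ?_
    apply mul_le_mul_of_nonneg_left _ (by positivity)
    have hlpos : 0 < ‖l1‖ := lt_of_lt_of_le (by positivity) hl
    rw [← Real.exp_log hlpos, ← Real.exp_nat_mul]
    apply Real.exp_le_exp.2
    rw [hmean] at hlog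
    have h2 := mul_le_mul_of_nonneg_left hlog hm'.le
    have e1 : (m:ℝ) * (Real.log ‖l1‖ * (n / m)) = n * Real.log ‖l1‖ := by field_simp
    have e2 : (m:ℝ) * -(0.9 * ∑ i : Fin L, P i.val*(1 - Real.cos (ψ i - ((i.val:ℝ)+1)*φ))) = -(0.9 * ∑ i, (μ i : ℝ) * (1 - Real.cos (ψ i - ((i.val:ℝ)+1) * φ))) := by
      rw [mul_neg, mul_left_comm, Finset.mul_sum]
      congr 2
      apply Finset.sum_congr rfl
      intro i _
      rw [hPv]; field_simp
    rw [e1, e2] at h2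
    exact h2


theorem normal_close (δ : ℝ) (hδ : 0 < δ) (hδ1 : δ < 1) (τ : ℝ) (hτ : 0 < τ) : ∃ k0 : ℕ, ∀ k : ℕ, k0 ≤ k → ∀ p : ℕ → ℝ, (∀ i, 0 ≤ p i) →
    p 1 = 0 → (∀ ℓ : ℕ, 2 ≤ ℓ → (ℓ : ℝ) ≤ Real.log (Real.log k) / 8 →
    |p ℓ - (2 : ℝ) ^ (1 - (ℓ : ℤ))| ≤
      ((ℓ : ℝ) ^ 4 * (2 - δ) ^ ℓ * Real.log k ^ ((1 : ℝ) / 8))⁻¹) →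
    (∀ ℓ : ℕ, Real.log (Real.log k) / 8 ≤ (ℓ : ℝ) →
    p ℓ ≤ ((ℓ : ℝ) ^ 4 * (2 - δ) ^ ℓ)⁻¹) → ∀ N : ℕ, ∑ i ∈ range N, |p (i+1) - gg i| * (2-δ)^(i+1) ≤ τ := by
  set r : ℝ := (2-δ)/2 with hr
  have hr0 : 0 ≤ r := by rw [hr]; linarith
  have hr1 : r < 1 := by rw [hr]; linarith
  set u : ℕ → ℝ := fun i => 1/((i:ℝ)+1)^4 + 2 * r^(i+1) with hu
  have hu0 : ∀ i, 0 ≤ u i := fun i => by simp only [hu]; positivity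
  have hus : Summable u := by
    apply Summable.add
    · have := (Real.summable_one_div_nat_pow (p := 4)).2 (by norm_num)
      have := (summable_nat_add_iff 1).2 this
      simpa using this
    · have := (summable_geometric_of_lt_one hr0 hr1)
      exact ((summable_nat_add_iff 1).2 this).mul_left 2
  set U := ∑' i, u i with hU
  have hU0 : 0 ≤ U := tsum_nonneg hu0
  have ht := hus.hasSum.tendsto_sum_nat
  obtain ⟨N0, hN0⟩ := (ht.eventually (lt_mem_nhds (show U - τ/2 < U by linarith))).exists
  have hlog : Filter.Tendsto (fun k : ℕ => Real.log (k:ℝ)) Filter.atTop Filter.atTop := Real.tendsto_log_atTop.comp tendsto_natCast_atTop_atTop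
  have h1 : ∀ᶠ k : ℕ in Filter.atTop, (N0 : ℝ) + 1 < Real.log (Real.log k) / 8 :=
    ((Real.tendsto_log_atTop.comp hlog).atTop_div_const (by norm_num)).eventually_gt_atTop _
  have h2 : ∀ᶠ k : ℕ in Filter.atTop, (2*(U+1)/τ) ≤ Real.log k ^ ((1:ℝ)/8) :=
    ((tendsto_rpow_atTop (by norm_num)).comp hlog).eventually_ge_atTop _
  obtain ⟨k0, hk0⟩ := Filter.eventually_atTop.1 (h1.and h2)
  refine ⟨k0, fun k hk p hp0 hp1 hA hB N => ?_⟩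
  obtain ⟨g1, g2⟩ := hk0 k hk
  set Y := Real.log k ^ ((1:ℝ)/8) with hY
  have hYpos : 0 < Y := lt_of_lt_of_le (by positivity) g2
  have hYU : Y⁻¹ * U ≤ τ/2 := by
    rw [div_le_iff₀ hτ] at g2
    rw [inv_mul_le_iff₀ hYpos]; nlinarith
  have hb : (0:ℝ) < 2 - δ := by linarith
  have hterm : ∀ i, |p (i+1) - gg i| * (2-δ)^(i+1) ≤ Y⁻¹ * u i + (if N0 ≤ i then u i else 0) := by
    intro i
    have hite : 0 ≤ (if N0 ≤ i then u i else 0) := by split_ifs; exacts [hu0 i, le_rfl]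
    have hYu : 0 ≤ Y⁻¹ * u i := mul_nonneg (by positivity) (hu0 i)
    rcases Nat.eq_zero_or_pos i with h | h
    · subst h
      simp only [zero_add, hp1, gg, if_true, sub_zero, abs_zero, zero_mul]
      linarith
    have hgg : gg i = (2:ℝ)^(1 - ((i+1:ℕ):ℤ)) := by
      unfold gg
      rw [if_neg h.ne']
      push_cast
      rw [sub_add_cancel_right, zpow_neg, zpow_natCast, one_div, inv_pow]
    by_cases hM : ((i+1:ℕ):ℝ) ≤ Real.log (Real.log k) / 8
    · have h3 := hA (i+1) (by omega) hM
      rw [← hgg] at h3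
      calc |p (i+1) - gg i| * (2-δ)^(i+1) ≤ ((((i+1:ℕ) : ℝ)) ^ 4 * (2 - δ) ^ (i+1) * Y)⁻¹ * (2-δ)^(i+1) := by gcongr
        _ = Y⁻¹ * (1/((i:ℝ)+1)^4) := by push_cast; field_simp
        _ ≤ Y⁻¹ * u i := by
            gcongr
            simp only [hu]
            have : 0 ≤ 2 * r^(i+1) := by positivity
            linarith
        _ ≤ _ := by linarith
    · push Not at hM
      have h3 := hB (i+1) hM.le
      have hNi : N0 ≤ i := by
        have : (N0:ℝ) + 1 < ((i+1:ℕ):ℝ) := g1.trans hM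
        push_cast at this
        have : (N0:ℝ) < i := by linarith
        exact_mod_cast this.le
      rw [if_pos hNi]
      have h4 : |p (i+1) - gg i| ≤ p (i+1) + gg i := by
        rw [abs_le]; constructor <;> linarith [hp0 (i+1), gg_nonneg i]
      have h5 : gg i * (2-δ)^(i+1) = 2 * r^(i+1) := by
        unfold gg
        rw [if_neg h.ne', hr, div_pow, div_pow, one_pow, pow_succ (2:ℝ) i]; field_simp
      have h6 : p (i+1) * (2-δ)^(i+1) ≤ 1/((i:ℝ)+1)^4 := by
        calc p (i+1) * (2-δ)^(i+1) ≤ ((((i+1:ℕ) : ℝ)) ^ 4 * (2 - δ) ^ (i+1))⁻¹ * (2-δ)^(i+1) := by gcongr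
          _ = 1/((i:ℝ)+1)^4 := by push_cast; field_simp
      have h7 := mul_le_mul_of_nonneg_right h4 (by positivity : 0 ≤ (2-δ)^(i+1))
      have : u i = 1/((i:ℝ)+1)^4 + 2 * r^(i+1) := rfl
      linarith
  refine (Finset.sum_le_sum fun i _ => hterm i).trans ?_
  rw [Finset.sum_add_distrib, ← Finset.mul_sum, ← Finset.sum_filter]
  have hs1 : ∑ i ∈ range N, u i ≤ U := hus.sum_le_tsum _ fun i _ => hu0 i
  have hs2 : ∑ i ∈ range N with N0 ≤ i, u i + ∑ i ∈ range N0, u i ≤ U := by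
    rw [← Finset.sum_union]
    · exact hus.sum_le_tsum _ fun i _ => hu0 i
    · rw [Finset.disjoint_left]
      intro i hi hi2
      have := (Finset.mem_filter.1 hi).2
      have := Finset.mem_range.1 hi2
      omega
  have hs3 : Y⁻¹ * ∑ i ∈ range N, u i ≤ Y⁻¹ * U := by gcongr
  linarith


theorem fib_sum {C : Type*} [Fintype C] (f : C → ℕ) (L : ℕ) (h1 : ∀ c, 1 ≤ f c) (hL : ∀ c, f c ≤ L) (w : ℕ → ℕ) :
    ∑ i : Fin L, w (i.val + 1) * Nat.card {c // f c = i.val + 1} = ∑ c, w (f c) := by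
  classical
  let g : C → Fin L := fun c => ⟨f c - 1, by have := h1 c; have := hL c; omega⟩
  rw [← Finset.sum_fiberwise Finset.univ g (fun c => w (f c))]
  apply Finset.sum_congr rfl
  intro i _
  have hg : ∀ c, g c = i ↔ f c = i.val + 1 := by
    intro c
    have := h1 c
    simp only [g, Fin.ext_iff]; omega
  rw [Finset.sum_congr rfl (g := fun _ => w (i.val+1))]
  · rw [Finset.sum_const, smul_eq_mul, mul_comm, Nat.card_eq_fintype_card, Fintype.card_subtype]
    simp only [hg]
  · intro c hc
    rw [(hg c).1 (Finset.mem_filter.1 hc).2]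

theorem comp_data {n m : ℕ} (hn : 0 < n) (S : SimpleGraph (Fin n)) (hS : PathsGraph S m) :
    ∃ (L : ℕ) (mu : Fin L →₀ ℕ), (∀ c : S.ConnectedComponent, c.supp.ncard ≤ L) ∧
      (∀ i : Fin L, mu i = Nat.card {c : S.ConnectedComponent // c.supp.ncard = i.val + 1}) ∧
      sz mu = m ∧ wt mu = n ∧ (∃ i : Fin L, i.val + 1 = L ∧ 1 ≤ mu i) ∧
      ∀ i : ℕ, xe (fun i : Fin L => (mu i : ℝ)/m) i = (Nat.card {c : S.ConnectedComponent // c.supp.ncard = i + 1} : ℝ)/m := by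
  classical
  haveI : Fintype S.ConnectedComponent := Fintype.ofFinite _
  let f : S.ConnectedComponent → ℕ := fun c => c.supp.ncard
  have h1 : ∀ c, 1 ≤ f c := by
    intro c
    have : c.supp.Nonempty := by
      induction c using SimpleGraph.ConnectedComponent.ind with
      | h v => exact ⟨v, rfl⟩
    exact (Set.ncard_pos (Set.toFinite _)).2 this
  have hne : (Finset.univ : Finset S.ConnectedComponent).Nonempty := ⟨S.connectedComponentMk ⟨0, hn⟩, Finset.mem_univ _⟩
  obtain ⟨c0, -, hc0⟩ := Finset.exists_max_image Finset.univ f hne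
  have hL : ∀ c, f c ≤ f c0 := fun c => hc0 c (Finset.mem_univ c)
  refine ⟨f c0, Finsupp.equivFunOnFinite.symm fun i => Nat.card {c : S.ConnectedComponent // c.supp.ncard = i.val + 1}, hL, fun i => rfl, ?_, ?_, ?_, ?_⟩
  · have := fib_sum f (f c0) h1 hL (fun _ => 1)
    simp only [one_mul, Finset.sum_const, smul_eq_mul, mul_one, Finset.card_univ] at this
    unfold sz
    rw [← hS.1, Nat.card_eq_fintype_card]
    exact this
  · have := fib_sum f (f c0) h1 hL (fun j => j)
    unfold wt
    refine Eq.trans this ?_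
    have e := Fintype.card_congr (Equiv.sigmaFiberEquiv (fun v : Fin n => S.connectedComponentMk v))
    rw [Fintype.card_sigma, Fintype.card_fin] at e
    refine Eq.trans ?_ e
    apply Finset.sum_congr rfl
    intro c _
    rw [← Nat.card_eq_fintype_card]
    exact (Nat.card_coe_set_eq c.supp).symm
  · refine ⟨⟨f c0 - 1, by have := h1 c0; omega⟩, ?_, ?_⟩
    · have := h1 c0
      simp only; omega
    · have := h1 c0
      change 1 ≤ Nat.card {c : S.ConnectedComponent // c.supp.ncard = f c0 - 1 + 1}
      haveI : Nonempty {c : S.ConnectedComponent // c.supp.ncard = f c0 - 1 + 1} := ⟨⟨c0, by change f c0 = _; omega⟩⟩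
      exact Nat.card_pos
  · intro i
    unfold xe
    split_ifs with h
    · rfl
    · have : IsEmpty {c : S.ConnectedComponent // c.supp.ncard = i + 1} := by
        constructor
        rintro ⟨c, hc⟩
        have := hL c
        change f c = _ at hc
        omega
      rw [Nat.card_of_isEmpty]; simp


theorem gg_mean (N : ℕ) : ∑ i ∈ range (N+1), ((i:ℝ)+1) * gg i = 3 - (2*N+6)/2^(N+1) := by
  induction N with
  | zero => simp [gg]; norm_num
  | succ N ih =>
    rw [Finset.sum_range_succ, ih]
    unfold gg
    rw [if_neg (by omega)]
    push_cast
    rw [div_pow, one_pow, pow_succ (2:ℝ) (N+1)]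
    field_simp
    ring

theorem close_conseq {R1 : ℝ} (h1 : 1 < R1) (h2 : R1 < 2) : ∃ K3 K K1 : ℝ, 0 < K3 ∧ 0 < K ∧ 1 ≤ K1 ∧
    ∀ (n m L : ℕ) (μ : Fin L →₀ ℕ), 0 < m → sz μ = m → wt μ = n → (∃ i : Fin L, i.val + 1 = L ∧ 1 ≤ μ i) → ∀ τ : ℝ, τ ≤ 1 →
    ∑ i ∈ range (L+1), |xe (fun i : Fin L => (μ i : ℝ)/m) i - gg i| * R1^(i+1) ≤ τ →
    (n:ℝ)/m ≤ 3 + K3 * τ ∧ ∑ i, (μ i : ℝ) * ((i.val:ℝ)+1)^2 ≤ K * n ∧ R1^L ≤ K1 * n := by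
  obtain ⟨K3, hK3, hK3'⟩ := poly_exp_bound 1 (R := 1) (R1 := R1) (by norm_num) h1
  obtain ⟨K2, hK2, hK2'⟩ := poly_exp_bound 2 (R := 1) (R1 := R1) (by norm_num) h1
  have hd : 0 ≤ 2 * R1 / (2 - R1) := div_nonneg (by linarith) (by linarith)
  set K1 := 1 + 2 * R1 / (2 - R1) with hK1
  refine ⟨K3, K2 * K1, K1, hK3, by positivity, by linarith, ?_⟩
  intro n m L μ hm hsz hwt hlast τ hτ hclose
  have hm' : (0:ℝ) < m := by exact_mod_cast hm
  have hmn : (m:ℝ) ≤ n := by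
    have : sz μ ≤ wt μ := by
      unfold sz wt
      apply Finset.sum_le_sum
      intro i _
      nlinarith [Nat.zero_le (i.val * μ i)]
    rw [hsz, hwt] at this
    exact_mod_cast this
  have hR0 : 0 < R1 := by linarith
  set P : ℕ → ℝ := xe (fun i : Fin L => (μ i : ℝ)/m) with hP
  have hmean : (n:ℝ) / m = ∑ i ∈ range L, ((i:ℝ)+1) * P i := by
    rw [hP, sum_range_xe _ (fun i y => ((i:ℝ)+1) * y), div_eq_iff hm'.ne', Finset.sum_mul, ← hwt]
    unfold wt; push_cast
    apply Finset.sum_congr rfl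
    intro i _
    field_simp
  have hPR := sum_p_R1 hR0.le h2 hclose
  have hPR1 : ∑ i ∈ range L, P i * R1^(i+1) ≤ K1 := by linarith
  have hPm : m * ∑ i ∈ range L, P i * R1^(i+1) = ∑ i : Fin L, (μ i : ℝ) * R1^(i.val+1) := by
    rw [hP, sum_range_xe _ (fun i y => y * R1^(i+1)), Finset.mul_sum]
    apply Finset.sum_congr rfl
    intro i _
    field_simp
  have hμR : ∑ i : Fin L, (μ i : ℝ) * R1^(i.val+1) ≤ K1 * n := by
    rw [← hPm]
    have : m * ∑ i ∈ range L, P i * R1^(i+1) ≤ m * K1 := by gcongr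
    have : m * K1 ≤ n * K1 := by gcongr
    linarith
  refine ⟨?_, ?_, ?_⟩
  · rw [hmean]
    have hPL : P L = 0 := xe_ge _ le_rfl
    have e1 : ∑ i ∈ range L, ((i:ℝ)+1) * P i = ∑ i ∈ range (L+1), ((i:ℝ)+1) * P i := by
      rw [Finset.sum_range_succ, hPL]; simp
    rw [e1]
    calc ∑ i ∈ range (L+1), ((i:ℝ)+1) * P i ≤ ∑ i ∈ range (L+1), (((i:ℝ)+1) * gg i + K3 * (|P i - gg i| * R1^(i+1))) := by
          apply Finset.sum_le_sum
          intro i _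
          have a1 := hK3' (i+1)
          rw [one_pow, mul_one, pow_one] at a1
          push_cast at a1
          have a2 := le_abs_self (P i - gg i)
          have a3 := mul_le_mul_of_nonneg_left a2 (by positivity : (0:ℝ) ≤ (i:ℝ)+1)
          have a4 := mul_le_mul_of_nonneg_right a1 (abs_nonneg (P i - gg i))
          nlinarith
      _ = (3 - (2*L+6)/2^(L+1)) + K3 * ∑ i ∈ range (L+1), (|P i - gg i| * R1^(i+1)) := by
          rw [Finset.sum_add_distrib, gg_mean, Finset.mul_sum]
      _ ≤ 3 + K3 * τ := by
          have : (0:ℝ) ≤ (2*L+6)/2^(L+1) := by positivity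
          have : K3 * ∑ i ∈ range (L+1), (|P i - gg i| * R1^(i+1)) ≤ K3 * τ := by gcongr
          linarith
  · calc ∑ i, (μ i : ℝ) * ((i.val:ℝ)+1)^2 ≤ ∑ i : Fin L, K2 * ((μ i : ℝ) * R1^(i.val+1)) := by
          apply Finset.sum_le_sum
          intro i _
          have a1 := hK2' (i.val+1)
          rw [one_pow, mul_one] at a1
          push_cast at a1
          have a4 := mul_le_mul_of_nonneg_left a1 (by positivity : (0:ℝ) ≤ (μ i : ℝ))
          linarith
      _ ≤ K2 * (K1 * n) := by rw [← Finset.mul_sum]; gcongr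
      _ = _ := by ring
  · obtain ⟨i, hi, hμi⟩ := hlast
    have hμi' : (1:ℝ) ≤ μ i := by exact_mod_cast hμi
    have := Finset.single_le_sum (f := fun i : Fin L => (μ i : ℝ) * R1^(i.val+1)) (fun _ _ => by positivity) (Finset.mem_univ i)
    simp only [hi] at this
    have h3 : 1 * R1^L ≤ (μ i : ℝ) * R1^L := by gcongr
    linarith


theorem asym1 (a C e x : ℝ) (he : 0 < e) (hx : 0 < x) : ∃ N : ℕ, ∀ n : ℕ, N ≤ n → C * ((a + 2 * Real.log n) * (n:ℝ)^(-e)) ≤ x := by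
  have h1 : Filter.Tendsto (fun y : ℝ => C * ((a + 2 * Real.log y) * y^(-e))) Filter.atTop (nhds 0) := by
    have t1 := tendsto_rpow_neg_atTop he
    have t2 := (isLittleO_log_rpow_atTop he).tendsto_div_nhds_zero
    have t3 : Filter.Tendsto (fun y : ℝ => C * (a * y^(-e) + 2 * (Real.log y / y^e))) Filter.atTop (nhds (C * (a * 0 + 2 * 0))) :=
      ((t1.const_mul a).add (t2.const_mul 2)).const_mul C
    simp only [mul_zero, add_zero] at t3
    refine t3.congr' ?_
    filter_upwards [Filter.eventually_gt_atTop 0] with y hy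
    rw [Real.rpow_neg hy.le]
    ring
  exact Filter.eventually_atTop.1 ((h1.comp tendsto_natCast_atTop_atTop).eventually (ge_mem_nhds hx))

theorem asym2 (a s x : ℝ) (ha : 0 ≤ a) (hs : 1 < s) (hx : 0 < x) : ∃ N : ℕ, ∀ n : ℕ, N ≤ n →
    2 * (1/s)^n * Real.exp ((a + 2 * Real.log n) * (1 + Real.log n)) ≤ x := by
  have hl : 0 < Real.log s := Real.log_pos hs
  have hs0 : 0 < s := by linarith
  set D : ℝ := 2 * a + 4 with hD
  have hD0 : 0 < D := by positivity
  have t1 := (Real.isLittleO_pow_log_id_atTop (n := 2)).bound (show 0 < Real.log s / 2 / D by positivity)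
  have t1' := tendsto_natCast_atTop_atTop.eventually t1
  have t2 : Filter.Tendsto (fun n : ℕ => 2 * Real.exp (-(Real.log s / 2 * n))) Filter.atTop (nhds (2 * 0)) := by
    apply Filter.Tendsto.const_mul
    apply Real.tendsto_exp_neg_atTop_nhds_zero.comp
    exact (tendsto_natCast_atTop_atTop).const_mul_atTop (by positivity)
  rw [mul_zero] at t2
  have t2' := t2.eventually (ge_mem_nhds hx)
  have t3 := (Real.tendsto_log_atTop.comp tendsto_natCast_atTop_atTop).eventually_ge_atTop (1:ℝ)
  obtain ⟨N, hN⟩ := Filter.eventually_atTop.1 (t1'.and (t2'.and t3))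
  refine ⟨N, fun n hn => ?_⟩
  obtain ⟨b1, b2, b3⟩ := hN n hn
  simp only [Function.comp] at b3
  refine le_trans ?_ b2
  have e1 : (1/s)^n = Real.exp (-(Real.log s * n)) := by
    rw [one_div, inv_pow, Real.exp_neg, mul_comm, Real.exp_nat_mul, Real.exp_log hs0]
  rw [e1, mul_assoc, ← Real.exp_add]
  gcongr
  set y := Real.log n
  have h1 : (a + 2 * y) * (1 + y) ≤ D * y^2 := by
    rw [hD]; nlinarith [mul_nonneg ha (sub_nonneg.2 b3), mul_nonneg (mul_nonneg ha (by linarith : 0 ≤ y)) (sub_nonneg.2 b3)]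
  have h2 : y^2 ≤ Real.log s / 2 / D * n := by
    have := b1
    simp only [id, Real.norm_eq_abs] at this
    rw [abs_of_nonneg (by positivity), abs_of_nonneg (by positivity)] at this
    exact this
  have h3 : D * y^2 ≤ Real.log s / 2 * n := by
    calc D * y^2 ≤ D * (Real.log s / 2 / D * n) := by gcongr
      _ = _ := by field_simp
  linarith

theorem asym3 (a s : ℝ) (hs : 1 < s) : ∃ N : ℕ, ∀ k : ℕ, N ≤ k → a + k ≤ s^k := by
  have t := tendsto_pow_const_mul_const_pow_of_lt_one 1 (r := 1/s) (by positivity) (by rw [div_lt_one (by linarith)]; exact hs)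
  have t0 := tendsto_pow_const_mul_const_pow_of_lt_one 0 (r := 1/s) (by positivity) (by rw [div_lt_one (by linarith)]; exact hs)
  have t2 := (t0.const_mul a).add t
  simp only [mul_zero, add_zero] at t2
  obtain ⟨N, hN⟩ := Filter.eventually_atTop.1 (t2.eventually (ge_mem_nhds (zero_lt_one)))
  refine ⟨N, fun k hk => ?_⟩
  have := hN k hk
  simp only [pow_zero, one_mul, pow_one] at this
  have hs0 : 0 < s := by linarith
  have hp : 0 < s^k := by positivity
  rw [one_div, inv_pow, ← add_mul, ← div_eq_mul_inv, div_le_one hp] at this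
  exact this


theorem half_le_log (x : ℝ) (hx : 1.99 ≤ x) : 1/2 ≤ Real.log x := by
  rw [Real.le_log_iff_exp_le (by linarith)]
  have e1 : Real.exp (1/2) ^ 2 = Real.exp 1 := by rw [← Real.exp_nat_mul]; norm_num
  have := Real.exp_one_lt_d9
  by_contra h
  push Not at h
  have : (1.99:ℝ) < Real.exp (1/2) := by linarith
  nlinarith

set_option maxHeartbeats 2000000 in
theorem stmt12 (ε : ℝ) (hε : 0 < ε) :
    ∃ δ : ℝ, 0 < δ ∧ δ < 1 ∧ ∀ ε' : ℝ, 0 < ε' → ∃ N : ℕ, ∀ n : ℕ, N ≤ n →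
      ∀ k : ℕ, k ∣ n → (2 + ε) * Real.logb 2 n ≤ (k : ℝ) →
        ∀ (m : ℕ) (S : SimpleGraph (Fin n)), PathsGraph S m → GDeltaNormal k δ S m →
          (NS k S : ℝ) ≤ (3 + ε') * (m.factorial : ℝ) * 2 ^ m := by
  set a : ℝ := (2 + ε/2)/(2+ε) with ha
  have ha0 : 0 < a := by positivity
  have ha1 : a < 1 := by rw [ha, div_lt_one (by positivity)]; linarith
  set B2 : ℝ := (2:ℝ)^a with hB2
  have hB1 : 1 < B2 := Real.one_lt_rpow (by norm_num) ha0
  have hB22 : B2 < 2 := by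
    calc B2 < (2:ℝ)^(1:ℝ) := Real.rpow_lt_rpow_of_exponent_lt (by norm_num) ha1
      _ = 2 := Real.rpow_one 2
  set δ : ℝ := min 0.01 ((2-B2)/4) with hδ
  have hδ0 : 0 < δ := lt_min (by norm_num) (by linarith)
  have hδ1 : δ ≤ 0.01 := min_le_left _ _
  have hδ2 : δ ≤ (2-B2)/4 := min_le_right _ _
  refine ⟨δ, hδ0, by linarith, ?_⟩
  have hRB : B2 < 2 - 2*δ := by linarith
  have hη : 0 < (2-2*δ)/B2 - 1 := by
    rw [sub_pos, one_lt_div (by linarith)]; exact hRB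
  obtain ⟨c, τ0, hc, hcη, hτ0, hcore⟩ := core_bound (R := 2-2*δ) (R1 := 2-δ) (by linarith) (by linarith) (by linarith) hη
  obtain ⟨K3, K, K1, hK3, hK, hK1, hcons⟩ := close_conseq (R1 := 2-δ) (by linarith) (by linarith)
  set s : ℝ := Real.sqrt (1+c) with hs
  have hs2 : s^2 = 1+c := Real.sq_sqrt (by linarith)
  have hs1 : 1 < s := by rw [hs, Real.lt_sqrt (by norm_num)]; linarith
  have hs0 : 0 < s := by linarith
  set a0 : ℝ := 2 * Real.log K1 with ha0'
  have ha00 : 0 ≤ a0 := by have := Real.log_nonneg hK1; positivity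
  intro ε' hε'
  set τ : ℝ := min (min τ0 1) (min 1 (ε'/2) / K3) with hτ
  have hτpos : 0 < τ := lt_min (lt_min hτ0 one_pos) (div_pos (lt_min one_pos (by linarith)) hK3)
  have hτa : τ ≤ τ0 := (min_le_left _ _).trans (min_le_left _ _)
  have hτb : τ ≤ 1 := (min_le_left _ _).trans (min_le_right _ _)
  have hτc : K3 * τ ≤ min 1 (ε'/2) := by
    have : τ ≤ min 1 (ε'/2) / K3 := min_le_right _ _
    rw [le_div_iff₀ hK3] at this
    linarith
  obtain ⟨k0, hk0⟩ := normal_close δ hδ0 (by linarith) τ hτpos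
  obtain ⟨k1, hk1⟩ := asym3 a0 s hs1
  set C : ℝ := 12 * Real.exp (144 * K) * K1 with hC
  obtain ⟨N1, hN1⟩ := asym1 a0 C (ε/2) (ε'/4) (by positivity) (by positivity)
  obtain ⟨N2, hN2⟩ := asym1 a0 1 (ε/2) 1 (by positivity) one_pos
  obtain ⟨N3, hN3⟩ := asym2 a0 s (ε'/4) ha00 hs1 (by positivity)
  obtain ⟨N4, hN4⟩ := Filter.eventually_atTop.1 ((Real.tendsto_log_atTop.comp tendsto_natCast_atTop_atTop).eventually_ge_atTop (((k0 + k1 + 1 : ℕ)) : ℝ))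
  refine ⟨N1 + N2 + N3 + N4 + 1, fun n hn k hkn hk m S hS hnorm => ?_⟩
  have b1 := hN1 n (by omega)
  have b2 := hN2 n (by omega)
  have b3 := hN3 n (by omega)
  have b4 := hN4 n (by omega)
  simp only [Function.comp] at b4
  have hn0 : 0 < n := by omega
  have hn1 : (1:ℝ) ≤ n := by exact_mod_cast hn0
  have hn0' : (0:ℝ) < n := by linarith
  set y := Real.log n with hy
  have hy0 : 0 ≤ y := Real.log_nonneg hn1
  have hlog2 : Real.log 2 ≤ 1 := by have := Real.log_two_lt_d9; linarith
  have hlog20 : 0 < Real.log 2 := Real.log_pos (by norm_num)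
  have hyk : 2 * y ≤ k := by
    refine le_trans ?_ hk
    have h1 : y ≤ Real.logb 2 n := by
      rw [Real.logb, le_div_iff₀ hlog20]; nlinarith
    nlinarith
  have hkk : k0 + k1 + 1 ≤ k := by
    have : ((k0 + k1 + 1 : ℕ) : ℝ) ≤ k := by linarith
    exact_mod_cast this
  have hkpos : 0 < k := by omega
  set ρ : ℝ := 1 / B2 with hρ
  have hB0 : 0 < B2 := by linarith
  have hρ0 : 0 < ρ := by positivity
  have hρ1 : ρ ≤ 1 := by rw [hρ, div_le_one hB0]; exact hB1.le
  have hρc : (1+c)/(2-2*δ) ≤ ρ := by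
    rw [hρ, div_le_div_iff₀ (by linarith) hB0]
    have : 1 + c ≤ (2-2*δ)/B2 := by linarith
    rw [le_div_iff₀ hB0] at this
    linarith
  have hρk : ρ^k ≤ (n:ℝ)^(-(2+ε/2)) := by
    have h1 : (n:ℝ)^(2+ε/2) ≤ B2^k := by
      calc (n:ℝ)^(2+ε/2) = ((2:ℝ)^(Real.logb 2 n))^(2+ε/2) := by
            rw [Real.rpow_logb (by norm_num) (by norm_num) hn0']
        _ = (2:ℝ)^(Real.logb 2 n * (2+ε/2)) := by rw [← Real.rpow_mul (by norm_num)]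
        _ ≤ (2:ℝ)^(a * k) := by
            apply Real.rpow_le_rpow_of_exponent_le (by norm_num)
            have := mul_le_mul_of_nonneg_left hk ha0.le
            have e : a * ((2+ε) * Real.logb 2 n) = Real.logb 2 n * (2+ε/2) := by
              rw [ha]; field_simp
            linarith
        _ = B2^k := by rw [Real.rpow_mul (by norm_num), Real.rpow_natCast]
    rw [hρ, one_div, inv_pow, Real.rpow_neg hn0'.le]
    exact inv_anti₀ (by positivity) h1
  obtain ⟨L, mu, hL, hmu, hsz, hwt, hlast, hxe⟩ := comp_data hn0 S hS
  have hm : 0 < m := by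
    rw [← hsz]
    obtain ⟨i, _, hi⟩ := hlast
    unfold sz
    exact lt_of_lt_of_le hi (Finset.single_le_sum (f := fun i => mu i) (fun _ _ => Nat.zero_le _) (Finset.mem_univ i))
  have hm' : (0:ℝ) < m := by exact_mod_cast hm
  have hclose : ∑ i ∈ range (L+1), |xe (fun i : Fin L => (mu i : ℝ)/m) i - gg i| * (2-δ)^(i+1) ≤ τ := by
    obtain ⟨g1, g2, g3⟩ := hnorm
    have := hk0 k (by omega) (fun ℓ => (Nat.card {c : S.ConnectedComponent // c.supp.ncard = ℓ} : ℝ) / m) (fun _ => by positivity) g1 g2 g3 (L+1)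
    simpa only [hxe] using this
  obtain ⟨d1, d2, d3⟩ := hcons n m L mu hm hsz hwt hlast τ hτb hclose
  have hnm3 : (n:ℝ)/m ≤ 3 + ε'/2 := by have := min_le_right 1 (ε'/2); linarith
  have hnm4 : (n:ℝ)/m ≤ 4 := by have := min_le_left 1 (ε'/2); linarith
  have hLb : (L:ℝ) ≤ a0 + 2 * y := by
    have h1 : Real.log ((2-δ)^L) ≤ Real.log (K1 * n) := Real.log_le_log (pow_pos (by linarith) _) d3
    rw [Real.log_pow, Real.log_mul (by linarith) hn0'.ne'] at h1
    have h2 : 1/2 ≤ Real.log (2-δ) := half_le_log _ (by linarith)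
    have h3 : (L:ℝ) * (1/2) ≤ L * Real.log (2-δ) := by gcongr
    rw [ha0']; linarith
  have hLs : (L:ℝ) ≤ s^k := by
    have := hk1 k (by omega)
    linarith
  have hLn : (n:ℝ) * (L * ρ^k) ≤ (a0 + 2*y) * (n:ℝ)^(-(1+ε/2)) := by
    calc (n:ℝ) * (L * ρ^k) ≤ n * ((a0 + 2*y) * (n:ℝ)^(-(2+ε/2))) := by gcongr
      _ = (a0 + 2*y) * ((n:ℝ)^(1:ℝ) * (n:ℝ)^(-(2+ε/2))) := by rw [Real.rpow_one]; ring
      _ = _ := by rw [← Real.rpow_add hn0']; congr 2; ring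
  have hx : (n:ℝ) * (L * ρ^k) ≤ 1 := by
    refine hLn.trans (le_trans ?_ b2)
    rw [one_mul]
    gcongr
    linarith
  set G := Nat.sqrt n + 1 with hG
  have hGn : n ≤ G^2 := (Nat.lt_succ_sqrt' n).le
  have hfin := hcore n m k L hn0 hkpos hkn mu hsz hwt (hclose.trans hτa) s ρ K hs1 hs2 hLs hρc hρ1 hx d2 G hGn
  have hNS := NS_le hkpos S hS hL mu hmu
  have hm1 : (1:ℝ) ≤ Real.sqrt m := Real.one_le_sqrt.2 (by exact_mod_cast hm)
  have hfar : (2 * (1/s)^n) * (Real.exp 1 * Real.sqrt n)^L ≤ ε'/4 := by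
    refine le_trans ?_ b3
    gcongr
    have h1 : Real.exp 1 * Real.sqrt n ≤ Real.exp (1 + y) := by
      rw [Real.exp_add, hy, Real.exp_log hn0']
      gcongr
      rw [Real.sqrt_le_left hn0'.le]
      nlinarith
    calc (Real.exp 1 * Real.sqrt n)^L ≤ (Real.exp (1+y))^L := by gcongr
      _ = Real.exp (L * (1+y)) := by rw [← Real.exp_nat_mul]
      _ ≤ _ := by apply Real.exp_le_exp.2; gcongr
  have hfar2 : (2 * (1/s)^n) * (Real.exp 1 * Real.sqrt n)^L / Real.sqrt m ≤ ε'/4 := by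
    rw [div_le_iff₀ (by linarith)]
    nlinarith
  have hGm : (G:ℝ) / Real.sqrt m ≤ 4 := by
    have h1 : (Nat.sqrt n : ℝ) ≤ Real.sqrt n := Real.nat_sqrt_le_real_sqrt
    have h2 : (1:ℝ) ≤ Real.sqrt n := Real.one_le_sqrt.2 hn1
    have h3 : Real.sqrt n ≤ 2 * Real.sqrt m := by
      rw [Real.sqrt_le_left (by positivity), mul_pow, Real.sq_sqrt hm'.le]
      rw [div_le_iff₀ hm'] at hnm4
      linarith
    rw [div_le_iff₀ (by linarith), hG]
    push_cast
    linarith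
  have h195 : (1.95:ℝ)^L ≤ K1 * n := by
    refine le_trans ?_ d3
    gcongr
    linarith
  have hnear : (3 * (n * (L * ρ^k))) * Real.exp (144 * K) * G * 1.95^L / Real.sqrt m ≤ ε'/4 := by
    refine le_trans ?_ b1
    calc (3 * (n * (L * ρ^k))) * Real.exp (144 * K) * G * 1.95^L / Real.sqrt m
        = 3 * (n * (L * ρ^k)) * Real.exp (144 * K) * (G / Real.sqrt m) * 1.95^L := by ring
      _ ≤ 3 * ((a0 + 2*y) * (n:ℝ)^(-(1+ε/2))) * Real.exp (144 * K) * 4 * (K1 * n) := by gcongr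
      _ = C * ((a0 + 2*y) * ((n:ℝ)^(-(1+ε/2)) * (n:ℝ)^(1:ℝ))) := by rw [hC, Real.rpow_one]; ring
      _ = C * ((a0 + 2*y) * (n:ℝ)^(-(ε/2))) := by
          rw [← Real.rpow_add hn0']; congr 3; ring
  have hNS' : (NS k S : ℝ) ≤ 2^m * (((∏ i, (mu i).factorial) * MvPolynomial.coeff mu ((cyc L k) ^ (n / k)) : ℕ) : ℝ) := by
    exact_mod_cast hNS
  refine hNS'.trans ?_
  have hfm : (0:ℝ) < m.factorial := by exact_mod_cast Nat.factorial_pos m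
  calc (2:ℝ)^m * (((∏ i, (mu i).factorial) * MvPolynomial.coeff mu ((cyc L k) ^ (n / k)) : ℕ) : ℝ)
      ≤ 2^m * (m.factorial * (3 + ε')) := by
        gcongr
        refine hfin.trans ?_
        apply mul_le_mul_of_nonneg_left _ hfm.le
        rw [add_div]
        linarith
    _ = _ := by ring
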